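/- arXiv:1705.00171 — 9 statements merged into one kernel-verified Lean document; each statement's English description precedes it below -/
import Mathlib

section
/- Let n ≥ 1 and let A and Ã be n×n real symmetric matrices all of whose off-diagonal entries are nonnegative. If A_{i,j} ≥ Ã_{i,j} for all indices i, j, then the largest eigenvalue of A is greater than or equal to the largest eigenvalue of Ã. -/
/-- `μ` is the largest (real) eigenvalue of the matrix `A`. -/
def IsMaxEigenvalue {n : ℕ} (A : Matrix (Fin n) (Fin n) ℝ) (μ : ℝ) : Prop :=
  (∃ v : Fin n → ℝ, v ≠ 0 ∧ A.mulVec v = μ • v) ∧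
  ∀ μ' : ℝ, (∃ v : Fin n → ℝ, v ≠ 0 ∧ A.mulVec v = μ' • v) → μ' ≤ μ

/-!
If `v` is an eigenvector of `B` for the eigenvalue `μB` and `|v|` is its entrywise absolute value,
then entrywise domination of `B` by `A` gives `re μB * ‖v‖² = re (v* B v) ≤ |v|ᵀ A |v|`. If
`μA` bounds the spectrum of the symmetric matrix `A`, then `A ≤ μA • 1` in the Loewner order, so the
right-hand side is at most `μA * ‖v‖²`.
-/

open Matrix

section Spectrum

variable {ι K : Type*} [Fintype ι] [DecidableEq ι] [Field K]

theorem mem_spectrum_iff_exists_mulVec_eq_smul {A : Matrix ι ι K} {μ : K} :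
    μ ∈ spectrum K A ↔ ∃ v : ι → K, v ≠ 0 ∧ A *ᵥ v = μ • v := by
  rw [← spectrum_toLin', ← Module.End.hasEigenvalue_iff_mem_spectrum]
  constructor
  · intro hμ
    obtain ⟨v, hv⟩ := hμ.exists_hasEigenvector
    exact ⟨v, hv.2, by simpa only [toLin'_apply] using hv.apply_eq_smul⟩
  · rintro ⟨v, hv, hAv⟩
    exact Module.End.hasEigenvalue_of_hasEigenvector
      ⟨Module.End.mem_eigenspace_iff.2 (by rwa [toLin'_apply]), hv⟩

theorem isMaxEigenvalue_iff_isGreatest_spectrum {n : ℕ} {A : Matrix (Fin n) (Fin n) ℝ} {μ : ℝ} :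
    IsMaxEigenvalue A μ ↔ IsGreatest (spectrum ℝ A) μ := by
  simp only [IsMaxEigenvalue, IsGreatest, mem_upperBounds, mem_spectrum_iff_exists_mulVec_eq_smul]

end Spectrum

section QuadraticForm

variable {ι 𝕜 : Type*} [Fintype ι] [RCLike 𝕜]

theorem star_dotProduct_self_eq_sum_norm_sq (x : ι → 𝕜) :
    star x ⬝ᵥ x = ((∑ i, ‖x i‖ ^ 2 : ℝ) : 𝕜) := by
  simp only [dotProduct, Pi.star_apply, RCLike.star_def, RCLike.conj_mul, map_sum, map_pow]

theorem re_star_dotProduct_smul_self (c : 𝕜) (x : ι → 𝕜) :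
    RCLike.re (star x ⬝ᵥ c • x) = RCLike.re c * ∑ i, ‖x i‖ ^ 2 := by
  rw [dotProduct_smul, star_dotProduct_self_eq_sum_norm_sq, smul_eq_mul, RCLike.re_mul_ofReal]

open scoped MatrixOrder ComplexOrder in
theorem re_star_dotProduct_mulVec_le_of_mem_upperBounds_spectrum [DecidableEq ι]
    {A : Matrix ι ι 𝕜} (hA : A.IsHermitian) {μ : ℝ} (hμ : μ ∈ upperBounds (spectrum ℝ A))
    (x : ι → 𝕜) : RCLike.re (star x ⬝ᵥ A *ᵥ x) ≤ μ * ∑ i, ‖x i‖ ^ 2 := by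
  have hle : A ≤ algebraMap ℝ (Matrix ι ι 𝕜) μ :=
    le_algebraMap_of_spectrum_le (fun _ h => hμ h) hA
  have hscalar : algebraMap ℝ (Matrix ι ι 𝕜) μ *ᵥ x = (μ : 𝕜) • x := by
    rw [Algebra.algebraMap_eq_smul_one, smul_mulVec, one_mulVec,
      RCLike.real_smul_eq_coe_smul (K := 𝕜)]
  have hnonneg := (Matrix.le_iff.1 hle).re_dotProduct_nonneg x
  rwa [sub_mulVec, hscalar, dotProduct_sub, map_sub, re_star_dotProduct_smul_self,
    RCLike.ofReal_re, sub_nonneg] at hnonneg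

theorem re_star_dotProduct_mulVec_le_norm_dotProduct_mulVec_norm
    {A : Matrix ι ι ℝ} {B : Matrix ι ι 𝕜} (hdiag : ∀ i, RCLike.re (B i i) ≤ A i i)
    (hoff : ∀ i j, i ≠ j → ‖B i j‖ ≤ A i j) (v : ι → 𝕜) :
    RCLike.re (star v ⬝ᵥ B *ᵥ v) ≤ (fun i => ‖v i‖) ⬝ᵥ A *ᵥ (fun i => ‖v i‖) := by
  simp only [dotProduct, mulVec, Finset.mul_sum, map_sum, Pi.star_apply, RCLike.star_def]
  refine Finset.sum_le_sum fun i _ => Finset.sum_le_sum fun j _ => ?_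
  obtain rfl | hij := eq_or_ne i j
  -- `A i i` may be negative, but here `conj (v i) * v i` is already `‖v i‖ ^ 2`.
  · calc RCLike.re (starRingEnd 𝕜 (v i) * (B i i * v i))
        = RCLike.re (B i i) * ‖v i‖ ^ 2 := by
          rw [mul_left_comm, RCLike.conj_mul, ← RCLike.ofReal_pow, RCLike.re_mul_ofReal]
      _ ≤ A i i * ‖v i‖ ^ 2 := by gcongr; exact hdiag i
      _ = ‖v i‖ * (A i i * ‖v i‖) := by ring
  · calc RCLike.re (starRingEnd 𝕜 (v i) * (B i j * v j))
        ≤ ‖starRingEnd 𝕜 (v i) * (B i j * v j)‖ := RCLike.re_le_norm _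
      _ = ‖v i‖ * (‖B i j‖ * ‖v j‖) := by rw [norm_mul, norm_mul, RCLike.norm_conj]
      _ ≤ ‖v i‖ * (A i j * ‖v j‖) := by gcongr; exact hoff i j hij

end QuadraticForm

theorem stmt_0_general {ι 𝕜 : Type*} [Fintype ι] [DecidableEq ι] [RCLike 𝕜]
    {A : Matrix ι ι ℝ} {B : Matrix ι ι 𝕜} (hA : A.IsSymm)
    (hdiag : ∀ i, RCLike.re (B i i) ≤ A i i) (hoff : ∀ i j, i ≠ j → ‖B i j‖ ≤ A i j)
    {μA : ℝ} {μB : 𝕜} (hμA : μA ∈ upperBounds (spectrum ℝ A)) (hμB : μB ∈ spectrum 𝕜 B) :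
    RCLike.re μB ≤ μA := by
  obtain ⟨v, hv, hBv⟩ := mem_spectrum_iff_exists_mulVec_eq_smul.1 hμB
  have hpos : 0 < ∑ i, ‖v i‖ ^ 2 := by
    obtain ⟨i, hi⟩ := Function.ne_iff.1 hv
    exact Finset.sum_pos' (fun _ _ => by positivity)
      ⟨i, Finset.mem_univ i, pow_pos (norm_pos_iff.2 hi) 2⟩
  refine le_of_mul_le_mul_right ?_ hpos
  calc RCLike.re μB * ∑ i, ‖v i‖ ^ 2
      = RCLike.re (star v ⬝ᵥ B *ᵥ v) := by rw [hBv, re_star_dotProduct_smul_self]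
    _ ≤ (fun i => ‖v i‖) ⬝ᵥ A *ᵥ (fun i => ‖v i‖) :=
        re_star_dotProduct_mulVec_le_norm_dotProduct_mulVec_norm hdiag hoff v
    _ ≤ μA * ∑ i, ‖v i‖ ^ 2 := by
        simpa using re_star_dotProduct_mulVec_le_of_mem_upperBounds_spectrum
          (isHermitian_iff_isSymm.2 hA) hμA (fun i => ‖v i‖)

theorem stmt_0 {n : ℕ} (hn : 1 ≤ n) (A B : Matrix (Fin n) (Fin n) ℝ)
    (hA : A.IsSymm) (hB : B.IsSymm)
    (hAoff : ∀ i j : Fin n, i ≠ j → 0 ≤ A i j)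
    (hBoff : ∀ i j : Fin n, i ≠ j → 0 ≤ B i j)
    (hle : ∀ i j : Fin n, B i j ≤ A i j)
    (μA μB : ℝ) (hμA : IsMaxEigenvalue A μA) (hμB : IsMaxEigenvalue B μB) :
    μB ≤ μA := by
  rw [isMaxEigenvalue_iff_isGreatest_spectrum] at hμA hμB
  exact stmt_0_general hA (fun i => hle i i)
    (fun i j hij => (Real.norm_of_nonneg (hBoff i j hij)).trans_le (hle i j)) hμA.2 hμB.1
end

section
/- Let n ≥ 1 and let A be an n×n real symmetric matrix all of whose off-diagonal entries are nonnegative. If v ∈ ℝⁿ has all entries strictly positive and Av = μv for some real μ, then μ is the largest eigenvalue of A. -/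
open Matrix

theorem mulVec_apply_le_mulVec_apply_of_le_of_eq {ι R : Type*} [Fintype ι] [Semiring R]
    [PartialOrder R] [IsOrderedRing R] {A : Matrix ι ι R} {u w : ι → R} {i : ι}
    (hA : ∀ j, i ≠ j → 0 ≤ A i j) (hle : u ≤ w) (heq : u i = w i) :
    (A *ᵥ u) i ≤ (A *ᵥ w) i := by
  refine Finset.sum_le_sum fun j _ => ?_
  obtain rfl | hij := eq_or_ne i j
  · rw [heq]
  · exact mul_le_mul_of_nonneg_left (hle j) (hA j hij)

section LinearOrderedField

variable {ι K : Type*} [Field K] [LinearOrder K] [IsStrictOrderedRing K]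

theorem exists_pos_le_smul_and_apply_eq [Finite ι] {v w : ι → K} (hv : ∀ i, 0 < v i)
    (hw : ∃ i, 0 < w i) : ∃ c : K, 0 < c ∧ w ≤ c • v ∧ ∃ i, w i = (c • v) i := by
  obtain ⟨k, hk⟩ := hw
  have : Nonempty ι := ⟨k⟩
  obtain ⟨i, hi⟩ := Finite.exists_max fun j => w j / v j
  exact ⟨w i / v i, (div_pos hk (hv k)).trans_le (hi k),
    fun j => (div_le_iff₀ (hv j)).1 (hi j), i, (div_mul_cancel₀ _ (hv i).ne').symm⟩

variable [Fintype ι] {A : Matrix ι ι K} {v w : ι → K} {μ μ' : K}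

theorem le_of_smul_le_mulVec_of_mulVec_le_smul (hA : ∀ i j, i ≠ j → 0 ≤ A i j)
    (hv : ∀ i, 0 < v i) (hAv : A *ᵥ v ≤ μ • v) (hw : ∃ i, 0 < w i) (hAw : μ' • w ≤ A *ᵥ w) :
    μ' ≤ μ := by
  obtain ⟨c, hc, hle, i, hi⟩ := exists_pos_le_smul_and_apply_eq hv hw
  have hcv : 0 < c * v i := mul_pos hc (hv i)
  refine le_of_mul_le_mul_right ?_ hcv
  calc μ' * (c * v i) = (μ' • w) i := congrArg (μ' * ·) hi.symm
    _ ≤ (A *ᵥ w) i := hAw i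
    _ ≤ (A *ᵥ (c • v)) i := mulVec_apply_le_mulVec_apply_of_le_of_eq (hA i) hle hi
    _ = c * (A *ᵥ v) i := congrFun (mulVec_smul A c v) i
    _ ≤ c * (μ * v i) := mul_le_mul_of_nonneg_left (hAv i) hc.le
    _ = μ * (c * v i) := mul_left_comm c μ (v i)

theorem eigenvalue_le_of_mulVec_le_smul (hA : ∀ i j, i ≠ j → 0 ≤ A i j)
    (hv : ∀ i, 0 < v i) (hAv : A *ᵥ v ≤ μ • v) (hw : w ≠ 0) (hAw : A *ᵥ w = μ' • w) :
    μ' ≤ μ := by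
  obtain ⟨i, hi⟩ := Function.ne_iff.1 hw
  obtain hneg | hpos := lt_or_gt_of_ne hi
  · have hAnegw : A *ᵥ (-w) = μ' • (-w) := by rw [mulVec_neg, hAw, smul_neg]
    exact le_of_smul_le_mulVec_of_mulVec_le_smul hA hv hAv ⟨i, neg_pos.2 hneg⟩ hAnegw.ge
  · exact le_of_smul_le_mulVec_of_mulVec_le_smul hA hv hAv ⟨i, hpos⟩ hAw.ge

theorem stmt_1_general [Nonempty ι] (hA : ∀ i j, i ≠ j → 0 ≤ A i j) (hv : ∀ i, 0 < v i)
    (hμ : A *ᵥ v = μ • v) : IsGreatest {μ' : K | ∃ w : ι → K, w ≠ 0 ∧ A *ᵥ w = μ' • w} μ := by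
  have hv0 : v ≠ 0 := fun h => (hv (Classical.arbitrary ι)).ne' (congrFun h _)
  exact ⟨⟨v, hv0, hμ⟩, fun _ ⟨_, hw, hAw⟩ => eigenvalue_le_of_mulVec_le_smul hA hv hμ.le hw hAw⟩

end LinearOrderedField

theorem stmt_1 {n : ℕ} (hn : 1 ≤ n) (A : Matrix (Fin n) (Fin n) ℝ)
    (hA : A.IsSymm) (hAoff : ∀ i j : Fin n, i ≠ j → 0 ≤ A i j)
    (v : Fin n → ℝ) (hv : ∀ i, 0 < v i) (μ : ℝ) (hμ : A.mulVec v = μ • v) :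
    IsMaxEigenvalue A μ := by
  have : Nonempty (Fin n) := Fin.pos_iff_nonempty.1 hn
  exact stmt_1_general hAoff hv hμ
end

section
/- Let L ≥ 3 be an integer and λ > 0 a real number. For every a ∈ {0,1}^L with exactly two ones and every vector v ∈ ℝ^L such that v_i = 0 whenever a_i = 0, one has vᵀ(Π^{ph}_a − λΠ)v ≤ ((3 − 2λ + √(1 + 2λ²))/4)·‖v‖². -/
/-!
A vector supported on two sites only sees a `2 × 2` block of `Π^{ph}_a - λ Π`. Off the diagonal `Π`
is at most `1 / (2√2)` in absolute value, so the block is controlled by the diagonal of `Π^{ph}_a`,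
whose entries are at most `1`. One of the two entries is even at most `1 / 2`: an interior site with
at most one occupied neighbour contributes at most `1 / 2`, and two occupied endpoints are not
adjacent when `L ≥ 3`. The worst block therefore has diagonal `1 - λ/2`, `1/2 - λ/2` and
off-diagonal entry `±λ / (2√2)`, and its largest eigenvalue is the claimed bound.
-/

open Matrix

/-- The `L × L` matrix `Π` (1-based indices translated to `Fin L`):
diagonal entries `1/2`; entries `-1/(2√2)` on the off-diagonal positions
whose smaller (0-based) index is `0` or `L-2`; `-1/4` on the remaining
off-diagonal adjacent positions; `0` elsewhere. -/
noncomputable def PiMat (L : ℕ) : Matrix (Fin L) (Fin L) ℝ :=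
  Matrix.of fun i j =>
    if (i : ℕ) = (j : ℕ) then 1/2
    else if ((i : ℕ) + 1 = (j : ℕ) ∧ ((i : ℕ) = 0 ∨ (i : ℕ) = L - 2)) ∨
            ((j : ℕ) + 1 = (i : ℕ) ∧ ((j : ℕ) = 0 ∨ (j : ℕ) = L - 2)) then
      -1/(2*Real.sqrt 2)
    else if (i : ℕ) + 1 = (j : ℕ) ∨ (j : ℕ) + 1 = (i : ℕ) then -1/4
    else 0

/-- The diagonal matrix `Π^{ph}_a` (1-based indices translated to `Fin L`). -/
noncomputable def PiPh (L : ℕ) (a : Fin L → ℝ) : Matrix (Fin L) (Fin L) ℝ :=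
  Matrix.diagonal fun i =>
    let a' : ℕ → ℝ := fun k => if h : k < L then a ⟨k, h⟩ else 0
    if (i : ℕ) = 0 then a' 1
    else if (i : ℕ) = L - 1 then a' (L - 2)
    else (a' ((i : ℕ) - 1) + a' ((i : ℕ) + 1)) / 2

lemma dotProduct_mulVec_eq_of_support_pair {n R : Type*} [Fintype n] [CommRing R]
    {M : Matrix n n R} (hM : M.IsSymm) {p q : n} (hpq : p ≠ q) {v : n → R}
    (hv : ∀ i, i ≠ p → i ≠ q → v i = 0) :
    v ⬝ᵥ M *ᵥ v = M p p * v p ^ 2 + M q q * v q ^ 2 + 2 * M p q * v p * v q := by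
  have hMv (i : n) : (M *ᵥ v) i = M i p * v p + M i q * v q :=
    Fintype.sum_eq_add p q hpq fun j hj => by rw [hv j hj.1 hj.2, mul_zero]
  rw [dotProduct, Fintype.sum_eq_add p q hpq fun j hj => by rw [hv j hj.1 hj.2, zero_mul],
    hMv, hMv, hM.apply p q]
  ring

-- Writing `d = α - β`, this is the Cauchy-Schwarz inequality for `(d, 2γ)` and `(x² - y², 2xy)`,
-- the latter vector having norm `x² + y²`.
lemma binary_form_le_max_eigenvalue (α β γ x y : ℝ) :
    α * x ^ 2 + β * y ^ 2 + 2 * γ * x * y ≤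
      (α + β + √((α - β) ^ 2 + 4 * γ ^ 2)) / 2 * (x ^ 2 + y ^ 2) := by
  set s := √((α - β) ^ 2 + 4 * γ ^ 2)
  have hs : s ^ 2 = (α - β) ^ 2 + 4 * γ ^ 2 := Real.sq_sqrt (by positivity)
  have lagrange : (s * (x ^ 2 + y ^ 2)) ^ 2 =
      ((α - β) * (x ^ 2 - y ^ 2) + 4 * γ * x * y) ^ 2 +
        (2 * (α - β) * x * y - 2 * γ * (x ^ 2 - y ^ 2)) ^ 2 := by
    linear_combination (x ^ 2 + y ^ 2) ^ 2 * hs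
  have cauchy_schwarz : (α - β) * (x ^ 2 - y ^ 2) + 4 * γ * x * y ≤ s * (x ^ 2 + y ^ 2) :=
    le_of_sq_le_sq (lagrange ▸ le_add_of_nonneg_right (sq_nonneg _)) (by positivity)
  linarith

lemma two_site_form_le {α β γ : ℝ} (hα : α ≤ 1) (hβ : β ≤ 1 / 2) (hγ : γ ^ 2 ≤ 1 / 8)
    (lam x y : ℝ) :
    (α - lam / 2) * x ^ 2 + (β - lam / 2) * y ^ 2 + 2 * -(lam * γ) * x * y ≤
      (3 - 2 * lam + √(1 + 2 * lam ^ 2)) / 4 * (x ^ 2 + y ^ 2) := by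
  have hsqrt : √((1 - lam / 2 - (1 / 2 - lam / 2)) ^ 2 + 4 * (-(lam * γ)) ^ 2) ≤
      √(1 + 2 * lam ^ 2) / 2 := by
    refine Real.sqrt_le_iff.mpr ⟨by positivity, ?_⟩
    rw [div_pow, Real.sq_sqrt (by positivity)]
    linarith [mul_le_mul_of_nonneg_left hγ (sq_nonneg lam)]
  calc
    _ ≤ (1 - lam / 2) * x ^ 2 + (1 / 2 - lam / 2) * y ^ 2 + 2 * -(lam * γ) * x * y := by gcongr
    _ ≤ (1 - lam / 2 + (1 / 2 - lam / 2) +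
          √((1 - lam / 2 - (1 / 2 - lam / 2)) ^ 2 + 4 * (-(lam * γ)) ^ 2)) / 2 *
          (x ^ 2 + y ^ 2) := binary_form_le_max_eigenvalue ..
    _ ≤ _ := mul_le_mul_of_nonneg_right (by linarith) (by positivity)

lemma piMat_isSymm (L : ℕ) : (PiMat L).IsSymm := by
  ext i j
  simp only [transpose_apply, PiMat, of_apply, eq_comm (a := (j : ℕ)) (b := i), or_comm]

lemma piMat_apply_self {L : ℕ} (i : Fin L) : PiMat L i i = 1 / 2 := by
  simp [PiMat]

lemma piMat_apply_sq_le {L : ℕ} {i j : Fin L} (hij : i ≠ j) : PiMat L i j ^ 2 ≤ 1 / 8 := by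
  simp only [PiMat, of_apply, Fin.val_ne_of_ne hij, if_false]
  split_ifs <;> norm_num [div_pow, mul_pow]

section PiPh

variable {L : ℕ} {a : Fin L → ℝ} {i : Fin L}

lemma piPh_apply_first (hL : 1 < L) (hi : (i : ℕ) = 0) : PiPh L a i i = a ⟨1, hL⟩ := by
  simp [PiPh, hi, hL]

lemma piPh_apply_last (hL : 1 < L) (hi : (i : ℕ) = L - 1) :
    PiPh L a i i = a ⟨L - 2, by omega⟩ := by
  have hlt : L - 2 < L := by omega
  have hne : L - 1 ≠ 0 := by omega
  simp [PiPh, hi, hlt, hne]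

lemma piPh_apply_interior (hi₀ : (i : ℕ) ≠ 0) (hi : (i : ℕ) + 1 < L) :
    PiPh L a i i = (a ⟨i - 1, by omega⟩ + a ⟨i + 1, hi⟩) / 2 := by
  have hne : (i : ℕ) ≠ L - 1 := by omega
  have hlt : (i : ℕ) - 1 < L := by omega
  simp [PiPh, hi₀, hne, hlt, hi]

lemma piPh_apply_self_le_one (hL : 1 < L) (ha : ∀ i, a i ≤ 1) : PiPh L a i i ≤ 1 := by
  by_cases first : (i : ℕ) = 0
  · exact piPh_apply_first hL first ▸ ha _
  by_cases last : (i : ℕ) = L - 1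
  · exact piPh_apply_last hL last ▸ ha _
  rw [piPh_apply_interior first (by omega)]
  linarith [ha ⟨i - 1, by omega⟩, ha ⟨i + 1, by omega⟩]

lemma piPh_apply_self_le_half_or (hL : 3 ≤ L) (ha : ∀ i, a i ≤ 1) {p q : Fin L} (hpq : p < q)
    (ha₀ : ∀ i, i ≠ p → i ≠ q → a i = 0) : PiPh L a p p ≤ 1 / 2 ∨ PiPh L a q q ≤ 1 / 2 := by
  have unoccupied (k : ℕ) (hk : k < L) (hkp : k ≠ p) (hkq : k ≠ q) : a ⟨k, hk⟩ = 0 :=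
    ha₀ _ (Fin.ne_of_val_ne hkp) (Fin.ne_of_val_ne hkq)
  by_cases first : (p : ℕ) = 0
  · right
    by_cases last : (q : ℕ) = L - 1
    · rw [piPh_apply_last (by omega) last, unoccupied (L - 2) _ (by omega) (by omega)]
      norm_num
    · rw [piPh_apply_interior (by omega) (by omega),
        unoccupied (q + 1) _ (by omega) (by omega), add_zero]
      linarith [ha ⟨q - 1, by omega⟩]
  · left
    rw [piPh_apply_interior first (by omega),
      unoccupied (p - 1) _ (by omega) (by omega), zero_add]
    linarith [ha ⟨p + 1, by omega⟩]

end PiPh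

lemma exists_pair_piPh_le_half_of_card_support_le_two {L : ℕ} (hL : 3 ≤ L) {a : Fin L → ℝ}
    (ha : ∀ i, a i ≤ 1) (ha2 : (Finset.univ.filter fun i => a i ≠ 0).card ≤ 2) :
    ∃ p q, p ≠ q ∧ (∀ i, i ≠ p → i ≠ q → a i = 0) ∧ PiPh L a q q ≤ 1 / 2 := by
  obtain ⟨t, ht, htcard⟩ := Finset.exists_superset_card_eq ha2 (by rw [Fintype.card_fin]; omega)
  obtain ⟨p, q, hpq, rfl⟩ := Finset.card_eq_two.mp htcard
  have ha₀ (i : Fin L) (hip : i ≠ p) (hiq : i ≠ q) : a i = 0 := by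
    by_contra hi
    simpa [hip, hiq] using ht (Finset.mem_filter.mpr ⟨Finset.mem_univ i, hi⟩)
  wlog hlt : p < q generalizing p q
  · exact this q p hpq.symm (Finset.pair_comm p q ▸ ht) (Finset.pair_comm p q ▸ htcard)
      (fun i hiq hip => ha₀ i hip hiq) (lt_of_le_of_ne (not_lt.mp hlt) hpq.symm)
  rcases piPh_apply_self_le_half_or hL ha hlt ha₀ with hp | hq
  · exact ⟨q, p, hpq.symm, fun i hiq hip => ha₀ i hip hiq, hp⟩
  · exact ⟨p, q, hpq, ha₀, hq⟩

theorem stmt_3_general (L : ℕ) (hL : 3 ≤ L) (lam : ℝ) (a : Fin L → ℝ) (ha : ∀ i, a i ≤ 1)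
    (ha2 : (Finset.univ.filter fun i => a i ≠ 0).card ≤ 2)
    (v : Fin L → ℝ) (hv : ∀ i, a i = 0 → v i = 0) :
    v ⬝ᵥ (PiPh L a - lam • PiMat L).mulVec v ≤
      ((3 - 2 * lam + √(1 + 2 * lam ^ 2)) / 4) * ∑ i, v i ^ 2 := by
  obtain ⟨p, q, hpq, ha₀, hq⟩ := exists_pair_piPh_le_half_of_card_support_le_two hL ha ha2
  have hv₀ (i : Fin L) (hip : i ≠ p) (hiq : i ≠ q) : v i = 0 := hv i (ha₀ i hip hiq)
  have hsymm : (PiPh L a - lam • PiMat L).IsSymm :=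
    (isSymm_diagonal _).sub ((piMat_isSymm L).smul lam)
  have hdiag (i : Fin L) : (PiPh L a - lam • PiMat L) i i = PiPh L a i i - lam / 2 := by
    rw [Matrix.sub_apply, Matrix.smul_apply, piMat_apply_self, smul_eq_mul, mul_one_div]
  have hoff : (PiPh L a - lam • PiMat L) p q = -(lam * PiMat L p q) := by
    rw [Matrix.sub_apply, Matrix.smul_apply, PiPh, diagonal_apply_ne _ hpq, zero_sub, smul_eq_mul]
  rw [dotProduct_mulVec_eq_of_support_pair hsymm hpq hv₀, hdiag, hdiag, hoff,
    Fintype.sum_eq_add p q hpq fun i hi => by rw [hv₀ i hi.1 hi.2, zero_pow two_ne_zero]]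
  exact two_site_form_le (piPh_apply_self_le_one (by omega) ha) hq (piMat_apply_sq_le hpq) ..

theorem stmt_3 (L : ℕ) (hL : 3 ≤ L) (lam : ℝ) (hlam : 0 < lam)
    (a : Fin L → ℝ) (ha01 : ∀ i, a i = 0 ∨ a i = 1)
    (ha2 : (Finset.univ.filter fun i => a i = 1).card = 2)
    (v : Fin L → ℝ) (hv : ∀ i, a i = 0 → v i = 0) :
    v ⬝ᵥ (PiPh L a - lam • PiMat L).mulVec v ≤
      ((3 - 2*lam + Real.sqrt (1 + 2*lam^2))/4) * ∑ i, (v i)^2 := by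
  have hone (i : Fin L) : a i ≠ 0 ↔ a i = 1 := by rcases ha01 i with h | h <;> simp [h]
  exact stmt_3_general L hL lam a (fun i => by rcases ha01 i with h | h <;> simp [h])
    (by simpa only [hone] using ha2.le) v hv
end

section
/- For every integer L ≥ 3, the matrix Π is positive semidefinite, i.e., vᵀΠv ≥ 0 for every v ∈ ℝ^L. -/
/-!
The entries of `Π` encode the degrees `1, 2, …, 2, 1` of the path with `L ≥ 3` vertices: its
off-diagonal entries are `-1 / (2 √(dᵢ dⱼ))` at neighbours. Hence `Π` is half of the normalized
Laplacian `D^(-1/2) (D - A) D^(-1/2)` of that path, and it inherits positive semidefiniteness from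
the Laplacian `D - A` by congruence.
-/

open Matrix

section NormalizedLaplacian

variable {V : Type*} [Fintype V] [DecidableEq V] (G : SimpleGraph V) [DecidableRel G.Adj]

/-- The normalized Laplacian `D^(-1/2) (D - A) D^(-1/2)` of a graph with degree matrix `D` and
adjacency matrix `A`. Since `0⁻¹ = 0`, the rows and columns of isolated vertices vanish, as is
customary. -/
noncomputable def normalizedLapMatrix : Matrix V V ℝ :=
  diagonal (fun i => (√(G.degree i))⁻¹) * G.lapMatrix ℝ * diagonal (fun i => (√(G.degree i))⁻¹)

theorem posSemidef_normalizedLapMatrix : (normalizedLapMatrix G).PosSemidef := by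
  simpa only [normalizedLapMatrix, diagonal_conjTranspose, star_trivial] using
    (G.posSemidef_lapMatrix ℝ).conjTranspose_mul_mul_same (diagonal fun i => (√(G.degree i))⁻¹)

theorem normalizedLapMatrix_apply (i j : V) :
    normalizedLapMatrix G i j = (√(G.degree i))⁻¹ * G.lapMatrix ℝ i j * (√(G.degree j))⁻¹ := by
  rw [normalizedLapMatrix, mul_diagonal, diagonal_mul]

variable {G} {i j : V}

theorem normalizedLapMatrix_apply_self (hi : G.degree i ≠ 0) : normalizedLapMatrix G i i = 1 := by
  have hlap : G.lapMatrix ℝ i i = √(G.degree i) * √(G.degree i) := by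
    simp [SimpleGraph.lapMatrix, SimpleGraph.degMatrix]
  have hsqrt : √(G.degree i : ℝ) ≠ 0 := by positivity
  rw [normalizedLapMatrix_apply, hlap, inv_mul_cancel_left₀ hsqrt, mul_inv_cancel₀ hsqrt]

theorem normalizedLapMatrix_apply_of_adj (h : G.Adj i j) :
    normalizedLapMatrix G i j = -1 / (√(G.degree i) * √(G.degree j)) := by
  have hlap : G.lapMatrix ℝ i j = -1 := by
    simp [SimpleGraph.lapMatrix, SimpleGraph.degMatrix, h, h.ne]
  rw [normalizedLapMatrix_apply, hlap, div_eq_mul_inv, mul_inv]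
  ring

theorem normalizedLapMatrix_apply_of_not_adj (hne : i ≠ j) (h : ¬ G.Adj i j) :
    normalizedLapMatrix G i j = 0 := by
  simp [normalizedLapMatrix_apply, SimpleGraph.lapMatrix, SimpleGraph.degMatrix, h, hne]

end NormalizedLaplacian

section PathGraph

open SimpleGraph

variable {n : ℕ} {i j : Fin n} [Fintype ((pathGraph n).neighborSet i)]

theorem degree_pathGraph_of_endpoint (hn : 2 ≤ n) (hi : (i : ℕ) = 0 ∨ (i : ℕ) + 1 = n) :
    (pathGraph n).degree i = 1 := by
  rw [degree_eq_one_iff_existsUnique_adj]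
  simp only [pathGraph_adj]
  rcases hi with hfirst | hlast
  · exact ⟨⟨1, by omega⟩, by simp [hfirst], fun j hj => Fin.ext (by grind)⟩
  · exact ⟨⟨n - 2, by omega⟩, by grind, fun j hj => Fin.ext (by grind)⟩

theorem degree_pathGraph_of_interior (hpos : (i : ℕ) ≠ 0) (hlt : (i : ℕ) + 1 ≠ n) :
    (pathGraph n).degree i = 2 := by
  have hneighbors : (pathGraph n).neighborFinset i =
      {⟨i - 1, by omega⟩, ⟨i + 1, by omega⟩} := by
    ext j
    simp only [mem_neighborFinset, pathGraph_adj, Finset.mem_insert, Finset.mem_singleton,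
      Fin.ext_iff]
    omega
  rw [← card_neighborFinset_eq_degree, hneighbors, Finset.card_pair]
  simp only [ne_eq, Fin.ext_iff]
  omega

theorem degree_pathGraph (hn : 2 ≤ n) :
    (pathGraph n).degree i = if (i : ℕ) = 0 ∨ (i : ℕ) + 1 = n then 1 else 2 := by
  split_ifs with hi
  · exact degree_pathGraph_of_endpoint hn hi
  · rw [not_or] at hi
    exact degree_pathGraph_of_interior hi.1 hi.2

theorem sqrt_degree_mul_sqrt_degree_pathGraph_of_adj [Fintype ((pathGraph n).neighborSet j)]
    (hn : 3 ≤ n) (hadj : (pathGraph n).Adj i j) :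
    √((pathGraph n).degree i : ℝ) * √((pathGraph n).degree j : ℝ) =
      if ((i : ℕ) = 0 ∨ (i : ℕ) + 1 = n) ∨ ((j : ℕ) = 0 ∨ (j : ℕ) + 1 = n) then √2 else 2 := by
  have htwo : 2 ≤ n := by omega
  simp only [degree_pathGraph htwo]
  rw [pathGraph_adj] at hadj
  by_cases hi : (i : ℕ) = 0 ∨ (i : ℕ) + 1 = n
  · have hj : ¬ ((j : ℕ) = 0 ∨ (j : ℕ) + 1 = n) := by omega
    simp [hi, hj]
  · by_cases hj : (j : ℕ) = 0 ∨ (j : ℕ) + 1 = n <;> simp [hi, hj]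

end PathGraph

theorem piMat_eq_smul_normalizedLapMatrix {L : ℕ} [DecidableRel (SimpleGraph.pathGraph L).Adj]
    (hL : 3 ≤ L) : PiMat L = (1 / 2 : ℝ) • normalizedLapMatrix (SimpleGraph.pathGraph L) := by
  ext i j
  rw [Matrix.smul_apply, smul_eq_mul]
  rcases eq_or_ne i j with rfl | hne
  · have hdeg : (SimpleGraph.pathGraph L).degree i ≠ 0 := by
      rw [degree_pathGraph (Nat.le_of_succ_le hL)]
      split_ifs <;> norm_num
    simp [PiMat, normalizedLapMatrix_apply_self hdeg]
  have hval : (i : ℕ) ≠ j := Fin.val_ne_of_ne hne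
  by_cases hadj : (SimpleGraph.pathGraph L).Adj i j
  · rw [normalizedLapMatrix_apply_of_adj hadj,
      sqrt_degree_mul_sqrt_degree_pathGraph_of_adj hL hadj]
    rw [SimpleGraph.pathGraph_adj] at hadj
    simp only [PiMat, of_apply, if_neg hval]
    split_ifs <;> first | omega | ring
  · rw [normalizedLapMatrix_apply_of_not_adj hne hadj, mul_zero]
    rw [SimpleGraph.pathGraph_adj] at hadj
    simp only [PiMat, of_apply, if_neg hval, if_neg hadj]
    exact if_neg (by omega)

theorem posSemidef_piMat {L : ℕ} (hL : 3 ≤ L) : (PiMat L).PosSemidef := by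
  classical
  rw [piMat_eq_smul_normalizedLapMatrix hL]
  exact (posSemidef_normalizedLapMatrix _).smul (by norm_num)

theorem stmt_4 (L : ℕ) (hL : 3 ≤ L) (v : Fin L → ℝ) :
    0 ≤ v ⬝ᵥ (PiMat L).mulVec v := by
  simpa only [star_trivial] using (posSemidef_piMat hL).dotProduct_mulVec_nonneg v
end

section
/- For every real λ > 0, the largest eigenvalue μ of the 3×3 real symmetric matrix M(λ) with entries M₁₁ = M₂₂ = 1 − λ/2, M₃₃ = (1 − λ)/2, M₁₂ = M₂₁ = λ/(2√2), M₂₃ = M₃₂ = λ/4, M₁₃ = M₃₁ = 0 equals x*/4, where x* is the largest real root of the cubic equation x³ + (6λ − 10)x² + (9λ² − 40λ + 32)x + (2λ³ − 32λ² + 64λ − 32) = 0. -/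
noncomputable def M3 (l : ℝ) : Matrix (Fin 3) (Fin 3) ℝ :=
  !![1 - l/2, l/(2*Real.sqrt 2), 0;
     l/(2*Real.sqrt 2), 1 - l/2, l/4;
     0, l/4, (1 - l)/2]

/-- The cubic `x³ + (6λ − 10)x² + (9λ² − 40λ + 32)x + (2λ³ − 32λ² + 64λ − 32)`. -/
def cubic (l x : ℝ) : ℝ :=
  x^3 + (6*l - 10)*x^2 + (9*l^2 - 40*l + 32)*x + (2*l^3 - 32*l^2 + 64*l - 32)

/-!
Every real `l` satisfies `cubic l x = 64 * χ (x / 4)`, where `χ` is the characteristic polynomial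
of `M3 l`. The eigenvalues of `M3 l` are therefore the quarters of the real roots of the cubic, and
dividing by `4` preserves the order.
-/

open Matrix

lemma exists_mulVec_eq_smul_iff_isRoot_charpoly {n R : Type*} [Fintype n] [DecidableEq n]
    [CommRing R] [IsDomain R] (A : Matrix n n R) (μ : R) :
    (∃ v : n → R, v ≠ 0 ∧ A *ᵥ v = μ • v) ↔ A.charpoly.IsRoot μ := by
  rw [Polynomial.IsRoot.def, eval_charpoly, ← exists_mulVec_eq_zero_iff]
  simp only [sub_mulVec, scalar_apply, ← smul_one_eq_diagonal, smul_mulVec, one_mulVec,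
    sub_eq_zero, eq_comm]

lemma isMaxEigenvalue_iff_isGreatest {n : ℕ} (A : Matrix (Fin n) (Fin n) ℝ) (μ : ℝ) :
    IsMaxEigenvalue A μ ↔ IsGreatest {x | A.charpoly.IsRoot x} μ := by
  simp only [IsMaxEigenvalue, exists_mulVec_eq_smul_iff_isRoot_charpoly]
  rfl

lemma cubic_eq_eval_charpoly_M3 (l x : ℝ) : cubic l x = 64 * (M3 l).charpoly.eval (x / 4) := by
  have entry_sq : (l / (2 * √2)) ^ 2 = l ^ 2 / 8 := by
    rw [div_pow, mul_pow, Real.sq_sqrt zero_le_two]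
    norm_num
  rw [eval_charpoly, det_fin_three]
  simp only [M3, cubic, Matrix.sub_apply, scalar_apply, diagonal_apply, of_apply, cons_val,
    Fin.isValue, Fin.reduceEq, if_true, if_false]
  linear_combination (64 * (x / 4 - (1 - l) / 2)) * entry_sq

lemma setOf_isRoot_charpoly_M3 (l : ℝ) :
    {μ | (M3 l).charpoly.IsRoot μ} = (· / 4) '' {x | cubic l x = 0} := by
  ext μ
  constructor
  · intro hμ
    exact ⟨4 * μ, by simpa [cubic_eq_eval_charpoly_M3] using hμ, by ring⟩
  · rintro ⟨x, hx, rfl⟩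
    simpa [cubic_eq_eval_charpoly_M3] using hx

theorem stmt_9_general (l x : ℝ) :
    IsMaxEigenvalue (M3 l) (x / 4) ↔ IsGreatest {y | cubic l y = 0} x := by
  have div_four_strictMono : StrictMono fun y : ℝ => y / 4 :=
    fun _ _ h => div_lt_div_of_pos_right h four_pos
  rw [isMaxEigenvalue_iff_isGreatest, setOf_isRoot_charpoly_M3,
    div_four_strictMono.map_isGreatest]

theorem stmt_9 (l : ℝ) (hl : 0 < l) (xstar : ℝ)
    (hroot : cubic l xstar = 0) (hmax : ∀ x : ℝ, xstar < x → cubic l x ≠ 0) :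
    IsMaxEigenvalue (M3 l) (xstar/4) :=
  (stmt_9_general l xstar).2 ⟨hroot, fun x hx => not_lt.1 fun hlt => hmax x hlt hx⟩
end

section
/- Let L ≥ 3 be an integer and λ > 0 a real number. For each m ∈ {1,…,L}, let e_m ∈ {0,1}^L be the string with a 1 in position m and 0 elsewhere. Then for every m ∈ {1,…,L}, the largest eigenvalue of the real symmetric matrix Π^{ph}_{e_m} − λΠ is less than or equal to the largest eigenvalue of Π^{ph}_{e_2} − λΠ. -/
/-!
Put `M = L - 1`, count positions from `0`, and divide the two endpoint values of a function `f` on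
the path `0, …, M` by `√2` to get a vector `v`. Then
`2 (⟨v, (Π^{ph}_{e_m} - λ Π) v⟩ - ν ⟨v, v⟩)` is the sum of `f²` over the neighbours of `m` minus
the sum over the edges of the path of the cost `λ/2 (x - y)² + ν (x² + y²)`. For `ν ≥ 0` this cost
does not increase when `f` is replaced by `|f|` or truncated from above.

Say `|f (m + 1)| ≤ |f (m - 1)|`. Cut the path at `m - 1`, which becomes the new left end, and attach
the arm `0, …, m - 1`, reversed, at `M`. Truncating `|f|` at `|f (m - 1)|`, and on the moved arm
at `|f M|`, makes the two pieces agree at the gluing point. The cost does not increase, and the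
neighbours of position `1` now carry the old values `|f (m ± 1)|`. For `m = 0` one prepends a copy
of `f 1` to the path instead. So the lower bound for the cost that the largest eigenvalue gives in
position `1` holds in every position.
-/

open Matrix

/-- The standard basis vector `e_m` (as a `{0,1}`-valued string). -/
def eVec (L : ℕ) (m : Fin L) : Fin L → ℝ := fun i => if i = m then 1 else 0

lemma IsMaxEigenvalue.dotProduct_mulVec_le {n : ℕ} {A : Matrix (Fin n) (Fin n) ℝ} {μ : ℝ}
    (hμ : IsMaxEigenvalue A μ) (hA : A.IsHermitian) (v : Fin n → ℝ) :
    v ⬝ᵥ A *ᵥ v ≤ μ * (v ⬝ᵥ v) := by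
  have hB : (μ • (1 : Matrix (Fin n) (Fin n) ℝ) - A).IsHermitian :=
    (isHermitian_one.smul (IsSelfAdjoint.all μ)).sub hA
  have hpos : (μ • (1 : Matrix (Fin n) (Fin n) ℝ) - A).PosSemidef := by
    rw [hB.posSemidef_iff_eigenvalues_nonneg]
    intro i
    have heig := hB.mulVec_eigenvectorBasis i
    have hne : (hB.eigenvectorBasis i : Fin n → ℝ) ≠ 0 := fun h0 =>
      hB.eigenvectorBasis.orthonormal.ne_zero i (by ext j; exact congrFun h0 j)
    have hle := hμ.2 (μ - hB.eigenvalues i) ⟨_, hne, by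
      rw [sub_mulVec, smul_mulVec, one_mulVec] at heig
      rw [sub_smul, ← heig, sub_sub_cancel]⟩
    simpa using hle
  have h := hpos.dotProduct_mulVec_nonneg v
  simp only [star_trivial, sub_mulVec, smul_mulVec, one_mulVec, dotProduct_sub,
    dotProduct_smul, smul_eq_mul] at h
  linarith

lemma piMat_isHermitian (L : ℕ) : (PiMat L).IsHermitian := by
  ext i j
  simp only [conjTranspose_apply, star_trivial, PiMat, of_apply,
    eq_comm (a := (j : ℕ)) (b := (i : ℕ))]
  split_ifs <;> first | rfl | omega

section Path

/-- The sum of `h` over the neighbours of `i` in the path `0, …, M`, i.e. the adjacency operator of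
the path. -/
def neighborSum (M i : ℕ) (h : ℕ → ℝ) : ℝ :=
  (if 0 < i then h (i - 1) else 0) + if i < M then h (i + 1) else 0

/-- The sum over the edges of the path `0, …, M` of the cost `c` of the values of `f` at the two
ends of the edge. -/
def pathCost (c : ℝ → ℝ → ℝ) (M : ℕ) (f : ℕ → ℝ) : ℝ :=
  ∑ i ∈ Finset.range M, c (f i) (f (i + 1))

lemma sum_ite_adj_eq_neighborSum {M i : ℕ} (hi : i ≤ M) (h : ℕ → ℝ) :
    ∑ j : Fin (M + 1), (if i + 1 = j ∨ (j : ℕ) + 1 = i then h j else 0) = neighborSum M i h := by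
  have hsplit (j : ℕ) : (if i + 1 = j ∨ j + 1 = i then h j else 0) =
      (if j + 1 = i then h j else 0) + if i + 1 = j then h j else 0 := by
    split_ifs <;> first | omega | simp
  rw [Fin.sum_univ_eq_sum_range (fun j => if i + 1 = j ∨ j + 1 = i then h j else 0)]
  simp only [hsplit, Finset.sum_add_distrib, neighborSum]
  congr 1
  · cases i with
    | zero => simp
    | succ i => simp [show i < M + 1 by omega]
  · simp

lemma sum_mul_neighborSum (M : ℕ) (h g : ℕ → ℝ) :
    ∑ i : Fin (M + 1), h i * neighborSum M i g =
      ∑ i ∈ Finset.range M, (h i * g (i + 1) + h (i + 1) * g i) := by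
  rw [Fin.sum_univ_eq_sum_range (fun i => h i * neighborSum M i g)]
  simp only [neighborSum, mul_add, Finset.sum_add_distrib]
  rw [Finset.sum_range_succ', Finset.sum_range_succ (fun i => h i * if i < M then _ else _),
    add_comm]
  simp only [lt_irrefl, if_false, mul_zero, add_zero, Nat.succ_pos, if_true, Nat.add_sub_cancel]
  congr 1
  exact Finset.sum_congr rfl fun i hi => by rw [if_pos (Finset.mem_range.1 hi)]

lemma sum_mul_neighborSum_comm (M : ℕ) (h g : ℕ → ℝ) :
    ∑ i : Fin (M + 1), h i * neighborSum M i g = ∑ i : Fin (M + 1), g i * neighborSum M i h := by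
  simp only [sum_mul_neighborSum]
  exact Finset.sum_congr rfl fun i _ => by ring

lemma neighborSum_reflect {M m : ℕ} (hm : m ≤ M) (h : ℕ → ℝ) :
    neighborSum M (M - m) (fun i => h (M - i)) = neighborSum M m h := by
  have hleft (hlt : m < M) : M - (M - m - 1) = m + 1 := by omega
  have hright (hpos : 0 < m) : M - (M - m + 1) = m - 1 := by omega
  have hlt : M - m < M ↔ 0 < m := by omega
  simp only [neighborSum, Nat.sub_pos_iff_lt, hlt]
  rw [add_comm]
  congr 1 <;> split_ifs with hif <;> simp only [hleft, hright, hif]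

lemma pathCost_reflect {c : ℝ → ℝ → ℝ} (hc : ∀ x y, c x y = c y x) (M : ℕ) (f : ℕ → ℝ) :
    pathCost c M (fun i => f (M - i)) = pathCost c M f := by
  unfold pathCost
  rw [← Finset.sum_range_reflect]
  refine Finset.sum_congr rfl fun i hi => ?_
  have hiM := Finset.mem_range.1 hi
  rw [hc]
  simp only [show M - (M - 1 - i + 1) = i by omega,
    show M - (M - 1 - i) = i + 1 by omega]

end Path

section Rearrangement

/-- A cost of a pair of values at the ends of an edge which does not increase when the values are
replaced by their absolute values, truncated from above. Compare the contraction property of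
Dirichlet forms. -/
structure IsContractiveCost (c : ℝ → ℝ → ℝ) : Prop where
  nonneg : ∀ x y, 0 ≤ c x y
  symm : ∀ x y, c x y = c y x
  truncate_le : ∀ {t}, 0 ≤ t → ∀ x y, c (|x| ⊓ t) (|y| ⊓ t) ≤ c x y

/-- The rearrangement of `f` on the path `0, …, k + l` which cuts the path at `k` and attaches the
arm `0, …, k`, reversed, at `k + l`. The truncations make both pieces agree at the gluing point
`j = l`. -/
def moveArm (k l : ℕ) (f : ℕ → ℝ) : ℕ → ℝ := fun j =>
  if j ≤ l then |f (k + j)| ⊓ |f k| else |f (k + l - j)| ⊓ |f (k + l)|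

variable {c : ℝ → ℝ → ℝ}

lemma moveArm_of_le {k l j : ℕ} (f : ℕ → ℝ) (hj : j ≤ l) :
    moveArm k l f j = |f (k + j)| ⊓ |f k| := if_pos hj

lemma moveArm_add {k l j : ℕ} (f : ℕ → ℝ) :
    moveArm k l f (l + j) = |f (k - j)| ⊓ |f (k + l)| := by
  rcases j.eq_zero_or_pos with rfl | hj
  · rw [add_zero, moveArm_of_le f le_rfl, Nat.sub_zero, inf_comm]
  · rw [moveArm, if_neg (by omega), show k + l - (l + j) = k - j by omega]

lemma pathCost_moveArm_le (hc : IsContractiveCost c) (k l : ℕ) (f : ℕ → ℝ) :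
    pathCost c (k + l) (moveArm k l f) ≤ pathCost c (k + l) f := by
  have hright : pathCost c l (moveArm k l f) ≤
      ∑ j ∈ Finset.range l, c (f (k + j)) (f (k + j + 1)) := by
    refine Finset.sum_le_sum fun j hj => ?_
    have hjl := Finset.mem_range.1 hj
    rw [moveArm_of_le f hjl.le, moveArm_of_le f hjl]
    exact hc.truncate_le (abs_nonneg _) _ _
  have hleft : ∑ j ∈ Finset.range k, c (moveArm k l f (l + j)) (moveArm k l f (l + j + 1)) ≤
      pathCost c k f := by
    rw [← pathCost_reflect hc.symm]
    refine Finset.sum_le_sum fun j _ => ?_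
    rw [add_assoc, moveArm_add, moveArm_add]
    exact hc.truncate_le (abs_nonneg _) _ _
  calc pathCost c (k + l) (moveArm k l f)
      = pathCost c l (moveArm k l f) +
          ∑ j ∈ Finset.range k, c (moveArm k l f (l + j)) (moveArm k l f (l + j + 1)) := by
        rw [add_comm, pathCost, Finset.sum_range_add, pathCost]
    _ ≤ ∑ j ∈ Finset.range l, c (f (k + j)) (f (k + j + 1)) + pathCost c k f :=
        add_le_add hright hleft
    _ = pathCost c (k + l) f := by
        rw [add_comm, pathCost, pathCost, Finset.sum_range_add]

lemma neighborSum_le_pathCost_of_abs_le (hc : IsContractiveCost c) {k l : ℕ} (hl : 2 ≤ l)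
    (h : ∀ g, neighborSum (k + l) 1 (g ^ 2) ≤ pathCost c (k + l) g) (f : ℕ → ℝ)
    (hf : |f (k + 2)| ≤ |f k|) :
    neighborSum (k + l) (k + 1) (f ^ 2) ≤ pathCost c (k + l) f := by
  have hvalues : neighborSum (k + l) (k + 1) (f ^ 2) =
      neighborSum (k + l) 1 (moveArm k l f ^ 2) := by
    simp [neighborSum, moveArm_of_le f hl, moveArm_of_le f (Nat.zero_le l), hf,
      show 1 < l by omega, show 1 < k + l by omega]
  rw [hvalues]
  exact (h _).trans (pathCost_moveArm_le hc k l f)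

lemma neighborSum_zero_le_pathCost (hc : IsContractiveCost c) {M : ℕ} (hM : 2 ≤ M)
    (h : ∀ g, neighborSum M 1 (g ^ 2) ≤ pathCost c M g) (f : ℕ → ℝ) :
    neighborSum M 0 (f ^ 2) ≤ pathCost c M f := by
  obtain ⟨n, rfl⟩ := Nat.exists_eq_add_of_le' hM
  let g : ℕ → ℝ := fun j => if j = 0 then f 1 else f (j - 1)
  have hvalues : neighborSum (n + 2) 1 (g ^ 2) = 2 * neighborSum (n + 2) 0 (f ^ 2) := by
    simp [neighborSum, g, two_mul]
  have hcost : pathCost c (n + 2) g = pathCost c (n + 1) f + c (f 0) (f 1) := by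
    rw [pathCost, Finset.sum_range_succ', hc.symm (f 0)]
    simp [pathCost, g]
  have hfirst : c (f 0) (f 1) ≤ pathCost c (n + 2) f :=
    Finset.single_le_sum (f := fun i => c (f i) (f (i + 1))) (fun i _ => hc.nonneg _ _)
      (Finset.mem_range.2 (Nat.succ_pos _))
  have hinit : pathCost c (n + 1) f ≤ pathCost c (n + 2) f := by
    rw [pathCost, pathCost, Finset.sum_range_succ _ (n + 1)]
    exact le_add_of_nonneg_right (hc.nonneg _ _)
  linarith [h g]

theorem neighborSum_le_pathCost_of_one (hc : IsContractiveCost c) {M m : ℕ} (hM : 2 ≤ M)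
    (hm : m ≤ M) (h : ∀ g, neighborSum M 1 (g ^ 2) ≤ pathCost c M g) (f : ℕ → ℝ) :
    neighborSum M m (f ^ 2) ≤ pathCost c M f := by
  wlog hleft : m < M ∧ (0 < m → |f (m + 1)| ≤ |f (m - 1)|) generalizing m f
  · have hreflect := this (M.sub_le m) (fun i => f (M - i)) ⟨by grind, fun hpos => by
      have hlt : m < M := by omega
      have hpos' : 0 < m := by grind
      rw [show M - (M - m + 1) = m - 1 by omega, show M - (M - m - 1) = m + 1 by omega]
      grind⟩
    rw [pathCost_reflect hc.symm] at hreflect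
    exact (neighborSum_reflect hm (f ^ 2)).symm.trans_le hreflect
  obtain ⟨hmM, habs⟩ := hleft
  rcases m with _ | k
  · exact neighborSum_zero_le_pathCost hc hM h f
  · obtain ⟨l, rfl⟩ := Nat.exists_eq_add_of_le (show k ≤ M by omega)
    exact neighborSum_le_pathCost_of_abs_le hc (by omega) h f (habs k.succ_pos)

end Rearrangement

section QuadraticForm

/-- The vector of a function `f` on the path `0, …, M`, with the endpoint values divided by `√2`. In
these coordinates every edge has the same weight in the quadratic form of `Π`. -/
noncomputable def pathVec (M : ℕ) (f : ℕ → ℝ) : Fin (M + 1) → ℝ := fun i =>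
  if (i : ℕ) = 0 ∨ (i : ℕ) = M then f i / √2 else f i

/-- Twice the contribution of an edge to the quadratic form of `λ Π + ν` in the coordinates of
`pathVec`. -/
noncomputable def edgeCost (lam ν x y : ℝ) : ℝ := lam / 2 * (x - y) ^ 2 + ν * (x ^ 2 + y ^ 2)

lemma isContractiveCost_edgeCost {lam ν : ℝ} (hlam : 0 ≤ lam) (hν : 0 ≤ ν) :
    IsContractiveCost (edgeCost lam ν) where
  nonneg x y := by unfold edgeCost; positivity
  symm x y := by unfold edgeCost; ring
  truncate_le {t} ht x y := by
    have hsub : (|x| ⊓ t - |y| ⊓ t) ^ 2 ≤ (x - y) ^ 2 :=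
      sq_le_sq.2 ((abs_inf_sub_inf_le_abs _ _ _).trans (abs_abs_sub_abs_le x y))
    have hsq (z : ℝ) : (|z| ⊓ t) ^ 2 ≤ z ^ 2 := by
      rw [← sq_abs z]
      exact pow_le_pow_left₀ (le_inf (abs_nonneg z) ht) inf_le_left 2
    unfold edgeCost
    exact add_le_add (mul_le_mul_of_nonneg_left hsub (by positivity))
      (mul_le_mul_of_nonneg_left (add_le_add (hsq x) (hsq y)) hν)

lemma pathVec_surjective (M : ℕ) : Function.Surjective (pathVec M) := by
  refine fun v => ⟨fun n => if h : n < M + 1 then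
    (if n = 0 ∨ n = M then v ⟨n, h⟩ * √2 else v ⟨n, h⟩) else 0, funext fun i => ?_⟩
  simp only [pathVec, i.2, dite_true]
  split_ifs
  · exact mul_div_cancel_right₀ _ (by positivity)
  · rfl

variable {M : ℕ}

lemma pathVec_sq (hM : 1 ≤ M) (f : ℕ → ℝ) (i : Fin (M + 1)) :
    pathVec M f i ^ 2 = (f i) ^ 2 * neighborSum M i 1 / 2 := by
  have hi := i.is_le
  simp only [pathVec, neighborSum, Pi.one_apply]
  split_ifs <;> first | omega | norm_num [div_pow]

lemma pathVec_dotProduct_self (hM : 1 ≤ M) (f : ℕ → ℝ) :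
    pathVec M f ⬝ᵥ pathVec M f = ∑ i ∈ Finset.range M, (f i ^ 2 + f (i + 1) ^ 2) / 2 := by
  have h := sum_mul_neighborSum M (f ^ 2) 1
  simp only [dotProduct, ← sq, pathVec_sq hM, ← Finset.sum_div]
  simp only [Pi.pow_apply, Pi.one_apply, mul_one] at h
  rw [h]

lemma pathVec_mul_piMat_mul_pathVec (hM : 2 ≤ M) (f : ℕ → ℝ) (i j : Fin (M + 1)) :
    pathVec M f i * (PiMat (M + 1) i j * pathVec M f j) =
      (if i = j then pathVec M f i * pathVec M f i / 2 else 0) -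
        f i / 4 * if (i : ℕ) + 1 = j ∨ (j : ℕ) + 1 = i then f j else 0 := by
  have hi := i.is_le
  have hj := j.is_le
  have hleft (x y : ℝ) : x / √2 * (-1 / (2 * √2) * y) = -(x / 4 * y) := by
    field_simp; norm_num; ring
  have hright (x y : ℝ) : x * (-1 / (2 * √2) * (y / √2)) = -(x / 4 * y) := by
    field_simp; norm_num; ring
  by_cases hij : i = j
  · subst hij
    simp only [PiMat, of_apply, if_true, Nat.add_eq_left, one_ne_zero, or_self, if_false]
    ring
  · have hij' : (i : ℕ) ≠ j := Fin.val_ne_of_ne hij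
    simp only [PiMat, of_apply, pathVec, hij, hij', if_false]
    split_ifs <;> first | omega | simp only [hleft, hright] <;> ring | ring

lemma pathVec_dotProduct_piMat_mulVec (hM : 2 ≤ M) (f : ℕ → ℝ) :
    pathVec M f ⬝ᵥ PiMat (M + 1) *ᵥ pathVec M f =
      ∑ i ∈ Finset.range M, (f i - f (i + 1)) ^ 2 / 4 := by
  have hrow (i : Fin (M + 1)) : pathVec M f i * (PiMat (M + 1) *ᵥ pathVec M f) i =
      pathVec M f i * pathVec M f i / 2 - f i * neighborSum M i f / 4 := by
    simp only [mulVec, dotProduct, Finset.mul_sum, pathVec_mul_piMat_mul_pathVec hM,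
      Finset.sum_sub_distrib, Finset.sum_ite_eq, Finset.mem_univ, if_true]
    rw [← Finset.mul_sum, sum_ite_adj_eq_neighborSum i.is_le]
    ring
  rw [dotProduct]
  simp only [hrow, Finset.sum_sub_distrib, ← Finset.sum_div]
  rw [← dotProduct, pathVec_dotProduct_self (by omega), sum_mul_neighborSum]
  simp only [Finset.sum_div, ← Finset.sum_sub_distrib]
  exact Finset.sum_congr rfl fun i _ => by ring

lemma piPh_apply_self_mul_neighborSum (a : ℕ → ℝ) (i : Fin (M + 1)) :
    PiPh (M + 1) (fun j => a j) i i * neighborSum M i 1 = neighborSum M i a := by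
  have hi := i.is_le
  simp only [PiPh, diagonal_apply_eq, neighborSum, Pi.one_apply, dite_eq_ite,
    show M + 1 - 1 = M by omega, show M + 1 - 2 = M - 1 by omega]
  grind

lemma pathVec_mul_piPh_mulVec_pathVec (hM : 1 ≤ M) (a f : ℕ → ℝ) (i : Fin (M + 1)) :
    pathVec M f i * (PiPh (M + 1) (fun j => a j) *ᵥ pathVec M f) i =
      f i ^ 2 * neighborSum M i a / 2 := by
  have hdiag : (PiPh (M + 1) (fun j => a j) *ᵥ pathVec M f) i =
      PiPh (M + 1) (fun j => a j) i i * pathVec M f i := by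
    simp only [PiPh, mulVec_diagonal, diagonal_apply_eq]
  rw [hdiag, ← piPh_apply_self_mul_neighborSum]
  linear_combination
    PiPh (M + 1) (fun j => a j) i i * pathVec_sq hM f i

lemma pathVec_dotProduct_piPh_mulVec (hM : 1 ≤ M) (a : Fin (M + 1) → ℝ) (f : ℕ → ℝ) :
    pathVec M f ⬝ᵥ PiPh (M + 1) a *ᵥ pathVec M f =
      ∑ i, a i * neighborSum M i (f ^ 2) / 2 := by
  obtain ⟨a, rfl⟩ := Fin.val_injective.surjective_comp_right a
  simp only [dotProduct, Function.comp_def, pathVec_mul_piPh_mulVec_pathVec hM, ← Finset.sum_div]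
  exact congrArg (· / 2) (sum_mul_neighborSum_comm M (f ^ 2) a)

lemma two_mul_pathVec_dotProduct_mulVec_sub (hM : 2 ≤ M) (m : Fin (M + 1)) (lam ν : ℝ) (f : ℕ → ℝ) :
    2 * (pathVec M f ⬝ᵥ (PiPh (M + 1) (eVec (M + 1) m) - lam • PiMat (M + 1)) *ᵥ pathVec M f -
        ν * (pathVec M f ⬝ᵥ pathVec M f)) =
      neighborSum M m (f ^ 2) - pathCost (edgeCost lam ν) M f := by
  have hcost : pathCost (edgeCost lam ν) M f =
      2 * (lam * (pathVec M f ⬝ᵥ PiMat (M + 1) *ᵥ pathVec M f) +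
        ν * (pathVec M f ⬝ᵥ pathVec M f)) := by
    rw [pathVec_dotProduct_piMat_mulVec hM, pathVec_dotProduct_self (by omega)]
    simp only [Finset.mul_sum, ← Finset.sum_add_distrib]
    exact Finset.sum_congr rfl fun i _ => by unfold edgeCost; ring
  rw [hcost, sub_mulVec, dotProduct_sub, smul_mulVec, dotProduct_smul, smul_eq_mul,
    pathVec_dotProduct_piPh_mulVec (by omega)]
  simp only [eVec, ite_mul, one_mul, zero_mul, ite_div, zero_div, Finset.sum_ite_eq',
    Finset.mem_univ, if_true]
  ring

lemma IsMaxEigenvalue.neighborSum_le_pathCost (hM : 2 ≤ M) {m : Fin (M + 1)} {lam μ : ℝ}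
    (hμ : IsMaxEigenvalue (PiPh (M + 1) (eVec (M + 1) m) - lam • PiMat (M + 1)) μ) (f : ℕ → ℝ) :
    neighborSum M m (f ^ 2) ≤ pathCost (edgeCost lam μ) M f := by
  have hsymm : (PiPh (M + 1) (eVec (M + 1) m) - lam • PiMat (M + 1)).IsHermitian :=
    (isHermitian_diagonal _).sub ((piMat_isHermitian _).smul (IsSelfAdjoint.all lam))
  linarith [two_mul_pathVec_dotProduct_mulVec_sub hM m lam μ f,
    hμ.dotProduct_mulVec_le hsymm (pathVec M f)]

lemma IsMaxEigenvalue.nonneg (hM : 2 ≤ M) {m : Fin (M + 1)} {lam μ : ℝ}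
    (hμ : IsMaxEigenvalue (PiPh (M + 1) (eVec (M + 1) m) - lam • PiMat (M + 1)) μ) : 0 ≤ μ := by
  have hconst := hμ.neighborSum_le_pathCost hM 1
  have hnonneg : 0 ≤ neighborSum M m ((1 : ℕ → ℝ) ^ 2) := by
    simp only [neighborSum, one_pow, Pi.one_apply]; positivity
  have hcost : pathCost (edgeCost lam μ) M 1 = M * (2 * μ) := by
    norm_num [pathCost, edgeCost, mul_comm]
  have hMpos : (0 : ℝ) < M := by positivity
  have hmul : 0 ≤ M * (2 * μ) := hcost ▸ hnonneg.trans hconst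
  linarith [nonneg_of_mul_nonneg_right hmul hMpos]

end QuadraticForm

theorem stmt_11 (L : ℕ) (hL : 3 ≤ L) (lam : ℝ) (hlam : 0 < lam)
    (m : Fin L) (μm μ2 : ℝ)
    (hμm : IsMaxEigenvalue (PiPh L (eVec L m) - lam • PiMat L) μm)
    (hμ2 : IsMaxEigenvalue (PiPh L (eVec L ⟨1, by omega⟩) - lam • PiMat L) μ2) :
    μm ≤ μ2 := by
  obtain ⟨M, rfl⟩ : ∃ M, L = M + 1 := ⟨L - 1, by omega⟩
  have hM : 2 ≤ M := by omega
  obtain ⟨⟨v, hv, hAv⟩, -⟩ := hμm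
  obtain ⟨f, rfl⟩ := pathVec_surjective M v
  have hcost : neighborSum M m (f ^ 2) ≤ pathCost (edgeCost lam μ2) M f :=
    neighborSum_le_pathCost_of_one (isContractiveCost_edgeCost hlam.le (hμ2.nonneg hM)) hM m.is_le
      (hμ2.neighborSum_le_pathCost hM) f
  have hform := two_mul_pathVec_dotProduct_mulVec_sub hM m lam μ2 f
  rw [hAv, dotProduct_smul, smul_eq_mul] at hform
  have hnorm : 0 < pathVec M f ⬝ᵥ pathVec M f := by
    simpa using dotProduct_star_self_pos_iff.2 hv
  exact le_of_mul_le_mul_right (by linarith) hnorm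
end

section
/- For every integer L ≥ 5, every real w > 0, and every real y with −1 ≤ y ≤ 1, there exists a real x > x_w such that F(L, x, w, y) = 0 and F(L, x', w, y) ≠ 0 for all real x' > x; that is, the function x ↦ F(L, x, w, y) has a largest zero and this largest zero is strictly greater than x_w. -/
/-- The function `F(L,x,w,y)` from the paper. -/
noncomputable def Ffun (L : ℕ) (x w y : ℝ) : ℝ :=
  (1/2)*Real.cosh ((L:ℝ)*x) - 2*w*Real.cosh (((L:ℝ)-1)*x)
    + (2*w^2 - 1/2)*Real.cosh (((L:ℝ)-2)*x) + 2*w^2*Real.cosh (((L:ℝ)-4)*x)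
    + 2*w*(2*w*Real.cosh x - Real.cosh (2*x))*Real.cosh (((L:ℝ)-3)*x*y)

/-!
Put `δ = cosh (2x) - 2w cosh x`. The addition formulas give
`cosh x · F = -cosh x sinh x sinh ((L-5)x) - δ (cosh ((L-5)x) + cosh (2x) - δ (1 + cosh ((L-3)x)))
  - 2w δ cosh x (cosh ((L-3)xy) - 1)`.
To the right of `x_w` one has `δ > 0`, so for `L ≥ 5` the function `F` is negative as soon as
`δ (1 + cosh ((L-3)x)) < cosh ((L-5)x) + cosh (2x)`. At `x_w` this inequality is strict (there
either `δ = 0`, or `x_w = 0` and `δ = 1 - 2w < 1`), hence it persists slightly to the right of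
`x_w`. On the other hand `F ≥ sinh ((L-1)x) sinh x - 4w cosh ((L-1)x)`, which is positive for all
large `x`. So `F` has zeros to the right of a point `x₀ > x_w` with `F < 0`, and the zeros in
`[x₀, ∞)` form a compact set, which has a largest element.
-/

open Filter Real Set Topology

theorem exists_gt_isGreatest_preimage_singleton {α β : Type*} [ConditionallyCompleteLinearOrder α]
    [DenselyOrdered α] [TopologicalSpace α] [OrderTopology α] [LinearOrder β] [TopologicalSpace β]
    [OrderClosedTopology β] {f : α → β} {a : α} {b : β} (hf : Continuous f) (ha : f a < b)
    (htop : ∀ᶠ x in atTop, b < f x) : ∃ z, a < z ∧ IsGreatest (f ⁻¹' {b}) z := by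
  have : Nonempty α := ⟨a⟩
  obtain ⟨M, hM⟩ := eventually_atTop.1 (htop.and (eventually_ge_atTop a))
  have hpos : ∀ x, M ≤ x → b < f x := fun x hx => (hM x hx).1
  have hcompact : IsCompact (Icc a M ∩ f ⁻¹' {b}) :=
    isCompact_Icc.inter_right (isClosed_singleton.preimage hf)
  have hnonempty : (Icc a M ∩ f ⁻¹' {b}).Nonempty :=
    intermediate_value_Icc (hM M le_rfl).2 hf.continuousOn ⟨ha.le, (hpos M le_rfl).le⟩
  obtain ⟨z, ⟨hz, hfz⟩, hmax⟩ := hcompact.exists_isGreatest hnonempty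
  refine ⟨z, hz.1.lt_of_ne (by rintro rfl; exact ha.ne hfz), hfz, fun x hx => ?_⟩
  rcases le_total x a with hxa | hax
  · exact hxa.trans hz.1
  · have hxM : x ≤ M := le_of_not_ge fun hMx => (hpos x hMx).ne' hx
    exact hmax ⟨⟨hax, hxM⟩, hx⟩

theorem sinh_mul_sinh_nonneg {x y : ℝ} (h : 0 ≤ x * y) : 0 ≤ sinh x * sinh y := by
  simpa only [mul_nonneg_iff, sinh_nonneg_iff, sinh_nonpos_iff] using h

theorem cosh_mul_cosh_le_cosh_add {x y : ℝ} (h : 0 ≤ x * y) :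
    cosh x * cosh y ≤ cosh (x + y) := by
  rw [cosh_add]
  exact le_add_of_nonneg_right (sinh_mul_sinh_nonneg h)

theorem cosh_le_two_mul_sinh {x : ℝ} (hx : 1 ≤ x) : cosh x ≤ 2 * sinh x := by
  have hexp : cosh x - sinh x ≤ 1 := by
    rw [cosh_sub_sinh]
    exact exp_le_one_iff.2 (by linarith)
  have hsinh : x ≤ sinh x := self_le_sinh_iff.2 (by linarith)
  linarith

/-- The quantity `cosh (2x) - 2w cosh x`, whose positive zero is the point `x_w` when `1/2 < w`. -/
noncomputable def coshGap (w x : ℝ) : ℝ :=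
  cosh (2 * x) - 2 * w * cosh x

/-- The relation `xw = x_w`, where `x_w` is `0` for `w ≤ 1/2` and the positive solution of
`cosh (2x) = 2w cosh x` for `1/2 < w`. -/
def IsThreshold (w xw : ℝ) : Prop :=
  (w ≤ 1 / 2 ∧ xw = 0) ∨ (1 / 2 < w ∧ 0 < xw ∧ cosh (2 * xw) = 2 * w * cosh xw)

/-- The function `F` with its integer parameter replaced by a real number `l`. -/
noncomputable def FfunReal (l x w y : ℝ) : ℝ :=
  (1 / 2) * cosh (l * x) - 2 * w * cosh ((l - 1) * x)
    + (2 * w ^ 2 - 1 / 2) * cosh ((l - 2) * x) + 2 * w ^ 2 * cosh ((l - 4) * x)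
    + 2 * w * (2 * w * cosh x - cosh (2 * x)) * cosh ((l - 3) * x * y)

variable {l x x₀ w xw y : ℝ}

theorem continuous_coshGap (w : ℝ) : Continuous (coshGap w) := by
  unfold coshGap
  fun_prop

theorem cosh_mul_coshGap (w x x₀ : ℝ) :
    cosh x₀ * coshGap w x =
      cosh x * coshGap w x₀ + (cosh x - cosh x₀) * (2 * cosh x * cosh x₀ + 1) := by
  simp only [coshGap, cosh_two_mul, sinh_sq]
  ring

theorem coshGap_pos_of_lt (hx₀ : 0 ≤ x₀) (hgap : 0 ≤ coshGap w x₀) (hx : x₀ < x) :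
    0 < coshGap w x := by
  have hcosh : cosh x₀ < cosh x := cosh_strictMonoOn hx₀ (hx₀.trans hx.le) hx
  have hprod : 0 < cosh x₀ * coshGap w x := by
    rw [cosh_mul_coshGap]
    have := cosh_pos x
    have := cosh_pos x₀
    have := sub_pos.2 hcosh
    positivity
  exact pos_of_mul_pos_right hprod (cosh_pos x₀).le

namespace IsThreshold

theorem nonneg (h : IsThreshold w xw) : 0 ≤ xw := by
  rcases h with ⟨-, rfl⟩ | ⟨-, hpos, -⟩
  · exact le_rfl
  · exact hpos.le

theorem coshGap_nonneg (h : IsThreshold w xw) : 0 ≤ coshGap w xw := by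
  rcases h with ⟨hw, rfl⟩ | ⟨-, -, heq⟩
  · simp only [coshGap, mul_zero, cosh_zero]
    linarith
  · exact (sub_eq_zero.2 heq).ge

theorem coshGap_mul_lt (h : IsThreshold w xw) (hw : 0 < w) (l : ℝ) :
    coshGap w xw * (1 + cosh ((l - 3) * xw)) < cosh ((l - 5) * xw) + cosh (2 * xw) := by
  rcases h with ⟨-, rfl⟩ | ⟨-, -, heq⟩
  · simp only [coshGap, mul_zero, cosh_zero]
    linarith
  · rw [coshGap, sub_eq_zero.2 heq, zero_mul]
    exact add_pos (cosh_pos _) (cosh_pos _)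

end IsThreshold

namespace FfunReal

theorem continuous (l w y : ℝ) : Continuous fun x => FfunReal l x w y := by
  unfold FfunReal
  fun_prop

theorem eq_sinh_mul_sinh_add (l x w y : ℝ) :
    FfunReal l x w y = sinh ((l - 1) * x) * sinh x - 2 * w * cosh ((l - 1) * x)
      + 4 * w ^ 2 * cosh x * cosh ((l - 3) * x)
      - 2 * w * coshGap w x * cosh ((l - 3) * x * y) := by
  have hl : cosh (l * x) - cosh ((l - 2) * x) = 2 * (sinh ((l - 1) * x) * sinh x) := by
    rw [show l * x = (l - 1) * x + x by ring, show (l - 2) * x = (l - 1) * x - x by ring,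
      cosh_add, cosh_sub]
    ring
  have hl' : cosh ((l - 2) * x) + cosh ((l - 4) * x) = 2 * (cosh x * cosh ((l - 3) * x)) := by
    rw [show (l - 2) * x = (l - 3) * x + x by ring, show (l - 4) * x = (l - 3) * x - x by ring,
      cosh_add, cosh_sub]
    ring
  unfold FfunReal coshGap
  linear_combination (1 / 2) * hl + 2 * w ^ 2 * hl'

theorem cosh_mul_eq (l x w y : ℝ) :
    cosh x * FfunReal l x w y = -(cosh x * (sinh x * sinh ((l - 5) * x)))
      - coshGap w x * (cosh ((l - 5) * x) + cosh (2 * x)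
        - coshGap w x * (1 + cosh ((l - 3) * x)))
      - 2 * w * cosh x * coshGap w x * (cosh ((l - 3) * x * y) - 1) := by
  rw [eq_sinh_mul_sinh_add, show (l - 1) * x = (l - 3) * x + 2 * x by ring,
    show (l - 5) * x = (l - 3) * x - 2 * x by ring, cosh_add, sinh_add, cosh_sub, sinh_sub]
  simp only [coshGap, sinh_two_mul, cosh_two_mul]
  ring

theorem neg_of_coshGap_mul_lt (hl : 5 ≤ l) (hw : 0 ≤ w) (y : ℝ) (hgap : 0 < coshGap w x)
    (hlt : coshGap w x * (1 + cosh ((l - 3) * x)) < cosh ((l - 5) * x) + cosh (2 * x)) :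
    FfunReal l x w y < 0 := by
  have hcosh := cosh_pos x
  have hsinh : 0 ≤ cosh x * (sinh x * sinh ((l - 5) * x)) := by
    refine mul_nonneg hcosh.le (sinh_mul_sinh_nonneg ?_)
    nlinarith [mul_nonneg (sub_nonneg.2 hl) (sq_nonneg x)]
  have hmain := mul_pos hgap (sub_pos.2 hlt)
  have hy : 0 ≤ 2 * w * cosh x * coshGap w x * (cosh ((l - 3) * x * y) - 1) := by
    have := sub_nonneg.2 (one_le_cosh ((l - 3) * x * y))
    positivity
  have hprod : cosh x * FfunReal l x w y < 0 := by
    rw [cosh_mul_eq]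
    linarith
  exact neg_of_mul_neg_right hprod hcosh.le

theorem eventually_nhdsGT_neg (hl : 5 ≤ l) (hw : 0 < w) (y : ℝ) (hxw : IsThreshold w xw) :
    ∀ᶠ x in 𝓝[>] xw, FfunReal l x w y < 0 := by
  have hlt : ∀ᶠ x in 𝓝 xw,
      coshGap w x * (1 + cosh ((l - 3) * x)) < cosh ((l - 5) * x) + cosh (2 * x) := by
    have hgap := continuous_coshGap w
    exact ContinuousAt.eventually_lt (by fun_prop) (by fun_prop) (hxw.coshGap_mul_lt hw l)
  filter_upwards [nhdsWithin_le_nhds hlt, self_mem_nhdsWithin] with x hlt hx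
  exact neg_of_coshGap_mul_lt hl hw.le y
    (coshGap_pos_of_lt hxw.nonneg hxw.coshGap_nonneg hx) hlt

theorem sinh_mul_sinh_sub_le (hl : 3 ≤ l) (hw : 0 ≤ w) (hy : |y| ≤ 1) (x : ℝ) :
    sinh ((l - 1) * x) * sinh x - 4 * w * cosh ((l - 1) * x) ≤ FfunReal l x w y := by
  have hcosh_y : cosh ((l - 3) * x * y) ≤ cosh ((l - 3) * x) := by
    rw [cosh_le_cosh, abs_mul]
    exact mul_le_of_le_one_right (abs_nonneg _) hy
  have hcosh : cosh (2 * x) * cosh ((l - 3) * x * y) ≤ cosh ((l - 1) * x) :=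
    calc cosh (2 * x) * cosh ((l - 3) * x * y)
        ≤ cosh (2 * x) * cosh ((l - 3) * x) := by gcongr
      _ ≤ cosh (2 * x + (l - 3) * x) := cosh_mul_cosh_le_cosh_add <| by
          nlinarith [mul_nonneg (sub_nonneg.2 hl) (sq_nonneg x)]
      _ = cosh ((l - 1) * x) := by ring_nf
  have hsq : 0 ≤ 4 * w ^ 2 * cosh x * (cosh ((l - 3) * x) + cosh ((l - 3) * x * y)) := by
    positivity
  rw [eq_sinh_mul_sinh_add, coshGap]
  linarith [mul_le_mul_of_nonneg_left hcosh hw]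

theorem eventually_atTop_pos (hl : 3 ≤ l) (hw : 0 ≤ w) (hy : |y| ≤ 1) :
    ∀ᶠ x in atTop, 0 < FfunReal l x w y := by
  filter_upwards [eventually_ge_atTop 1, eventually_ge_atTop (8 * w)] with x hx₁ hxw
  have harg : 1 ≤ (l - 1) * x := by nlinarith
  have hsinh : 0 < sinh ((l - 1) * x) := sinh_pos_iff.2 (by linarith)
  have hsinh_x : 8 * w < sinh x := hxw.trans_lt (self_lt_sinh_iff.2 (by linarith))
  calc 0 < sinh ((l - 1) * x) * (sinh x - 8 * w) := mul_pos hsinh (sub_pos.2 hsinh_x)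
    _ = sinh ((l - 1) * x) * sinh x - 4 * w * (2 * sinh ((l - 1) * x)) := by ring
    _ ≤ sinh ((l - 1) * x) * sinh x - 4 * w * cosh ((l - 1) * x) := by
        gcongr
        exact cosh_le_two_mul_sinh harg
    _ ≤ FfunReal l x w y := sinh_mul_sinh_sub_le hl hw hy x

end FfunReal

theorem stmt_14_general (hl : 5 ≤ l) (hw : 0 < w) (hy : |y| ≤ 1) (hxw : IsThreshold w xw) :
    ∃ x, xw < x ∧ IsGreatest {x | FfunReal l x w y = 0} x := by
  obtain ⟨x₀, hneg, hx₀⟩ :=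
    ((FfunReal.eventually_nhdsGT_neg hl hw y hxw).and self_mem_nhdsWithin).exists
  obtain ⟨x, hx, hgreatest⟩ := exists_gt_isGreatest_preimage_singleton
    (FfunReal.continuous l w y) hneg (FfunReal.eventually_atTop_pos (by linarith) hw.le hy)
  exact ⟨x, lt_trans hx₀ hx, hgreatest⟩

theorem stmt_14 (L : ℕ) (hL : 5 ≤ L) (w : ℝ) (hw : 0 < w) (y : ℝ)
    (hy : -1 ≤ y ∧ y ≤ 1) (xw : ℝ)
    (hxw : (w ≤ 1/2 ∧ xw = 0) ∨
           (1/2 < w ∧ 0 < xw ∧ Real.cosh (2*xw) = 2*w*Real.cosh xw)) :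
    ∃ x : ℝ, xw < x ∧ Ffun L x w y = 0 ∧ ∀ x' : ℝ, x < x' → Ffun L x' w y ≠ 0 := by
  obtain ⟨x, hx, hzero, hmax⟩ := stmt_14_general (Nat.ofNat_le_cast.2 hL) hw (abs_le.2 hy) hxw
  exact ⟨x, hx, hzero, fun x' hlt hzero' => (hmax hzero').not_gt hlt⟩
end

section
/- Let L ≥ 5 be an integer, s ∈ {−1, 1}, m a real number with |m| ≤ (L−5)/2, w a real number, and x > 0 a real number satisfying 2w·cosh(x) < cosh(2x). Then g_s(L, x, w, m) > 0. -/
/-- The function `g_s(L,x,w,m)` from the paper (`s ∈ {−1,1}`). -/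
noncomputable def gFun (L : ℕ) (x w m s : ℝ) : ℝ :=
  Real.cosh ((((L:ℝ)-1)/2 + s*m)*x) - 2*w*Real.cosh ((((L:ℝ)-3)/2 + s*m)*x)

/-!
With `u = ((L-3)/2 + s m) x`, the claim reads `2 w < cosh (u + x) / cosh u`, and the hypothesis on
`w` is the same inequality at `u = x`. Both are even in `x`, so take `x ≥ 0`. Then
`cosh (u + x) / cosh u = cosh x + tanh u * sinh x` is monotone in `u`, and `x ≤ u` follows from
`(5 - L)/2 ≤ s m`.
-/

open Real

theorem tanh_strictMono : StrictMono tanh := fun u v huv ↦ by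
  have h_sinh : 0 < sinh (v - u) := sinh_pos_iff.2 (sub_pos.2 huv)
  rw [sinh_sub] at h_sinh
  rw [tanh_eq_sinh_div_cosh, tanh_eq_sinh_div_cosh, div_lt_div_iff₀ (cosh_pos u) (cosh_pos v)]
  linarith

theorem cosh_add_div_cosh (u c : ℝ) : cosh (u + c) / cosh u = cosh c + tanh u * sinh c := by
  rw [cosh_add, tanh_eq_sinh_div_cosh]
  field_simp

theorem monotone_cosh_add_div_cosh {c : ℝ} (hc : 0 ≤ c) :
    Monotone fun u ↦ cosh (u + c) / cosh u := by
  simp only [cosh_add_div_cosh]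
  exact (tanh_strictMono.monotone.mul_const (sinh_nonneg_iff.2 hc)).const_add _

theorem mul_cosh_lt_cosh_add_of_le {t u v c : ℝ} (hc : 0 ≤ c) (huv : u ≤ v)
    (ht : t * cosh u < cosh (u + c)) : t * cosh v < cosh (v + c) := by
  rw [← lt_div_iff₀ (cosh_pos _)] at ht ⊢
  exact ht.trans_le (monotone_cosh_add_div_cosh hc huv)

theorem gFun_neg (L : ℕ) (x w m s : ℝ) : gFun L (-x) w m s = gFun L x w m s := by
  simp only [gFun, mul_neg, cosh_neg]

theorem stmt_17_general (L : ℕ) (s m w x : ℝ) (hsm : (5 - (L : ℝ)) / 2 ≤ s * m)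
    (hwx : 2 * w * cosh x < cosh (2 * x)) : 0 < gFun L x w m s := by
  wlog hx : 0 ≤ x generalizing x
  · rw [← gFun_neg]
    exact this (-x) (by simpa only [mul_neg, cosh_neg] using hwx) (by linarith)
  have hxu : x ≤ (((L : ℝ) - 3) / 2 + s * m) * x := le_mul_of_one_le_left hx (by linarith)
  have hlt := mul_cosh_lt_cosh_add_of_le hx hxu (two_mul x ▸ hwx)
  rw [gFun, sub_pos]
  convert hlt using 2
  ring

theorem stmt_17 (L : ℕ) (hL : 5 ≤ L) (s : ℝ) (hs : s = -1 ∨ s = 1)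
    (m : ℝ) (hm : |m| ≤ ((L:ℝ)-5)/2) (w : ℝ) (x : ℝ) (hx : 0 < x)
    (hwx : 2*w*Real.cosh x < Real.cosh (2*x)) :
    0 < gFun L x w m s := by
  have hsm : |s * m| = |m| := by rcases hs with rfl | rfl <;> simp
  exact stmt_17_general L s m w x (by linarith [neg_abs_le (s * m)]) hwx
end

section
/- Let L ≥ 5 be an integer, λ > 0 a real number, m₀ ∈ {2, …, L−1}, x a real number, and set α = cosh((m₀−1)x) − (2/λ)·cosh((m₀−2)x) and β = cosh((L−m₀)x) − (2/λ)·cosh((L−m₀−1)x). Define v ∈ ℝ^L by v₁ = β/√2, v_i = β·cosh((i−1)x) for 2 ≤ i ≤ m₀−1, v_{m₀} = α·β, v_i = α·cosh((L−i)x) for m₀+1 ≤ i ≤ L−1, and v_L = α/√2. Then the matrix A = Π^{ph}_{e_{m₀}} − λΠ satisfies (Av)_j = (λ(cosh(x) − 1)/2)·v_j for every j ≠ m₀, and (Av)_{m₀} = (λ(cosh(x) − 1)/2)·v_{m₀} − (λ/4)·F(L, x, 1/λ, (2m₀ − L − 1)/(L − 3)). -/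
/-!
Reflect the chain at its two ends, so that the only neighbour of an end site counts as both its left
and its right neighbour. Conjugated by the end weights, `Π` is half of the identity minus the
average over the two neighbours, uniformly in the site; and since `cosh` is even, `cosh (k x)`
satisfies the recurrence `cosh ((k + 1) x) + cosh ((k - 1) x) = 2 cosh x cosh (k x)` across the
reflecting end too. At a site next to the defect, the potential amounts to adding `2/λ` times the
value at that site to the value `α β` on the defect, and `α` and `β` are chosen so that this sum
continues the hyperbolic profile of that side. Hence the eigenvalue equation can fail only on the
defect, where the addition formulas identify the residual with `F`.
-/

open Matrix

section ReflectedChain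

/-- The left neighbour of the site `k` on the chain `0, 1, 2, …` reflected at `0`. -/
def leftNbr (k : ℕ) : ℕ := if k = 0 then 1 else k - 1

/-- The right neighbour of the site `k` on the chain `…, L - 2, L - 1` reflected at `L - 1`. -/
def rightNbr (L k : ℕ) : ℕ := if k + 1 = L then k - 1 else k + 1

/-- The weights, `√2` at the two ends of the chain `0, …, L - 1` and `1` elsewhere, whose diagonal
matrix conjugates `Π` into a reflected discrete Laplacian. -/
noncomputable def endWeight (L k : ℕ) : ℝ := if k = 0 ∨ k + 1 = L then √2 else 1

lemma endWeight_eq_one {L k : ℕ} (h0 : k ≠ 0) (hlast : k + 1 ≠ L) : endWeight L k = 1 :=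
  if_neg (by tauto)

lemma leftNbr_of_ne_zero {k : ℕ} (hk : k ≠ 0) : leftNbr k = k - 1 := if_neg hk

lemma rightNbr_of_ne {L k : ℕ} (hk : k + 1 ≠ L) : rightNbr L k = k + 1 := if_neg hk

lemma leftNbr_le (k : ℕ) : leftNbr k ≤ k + 1 := by
  unfold leftNbr
  split_ifs <;> omega

lemma le_rightNbr (L k : ℕ) : k ≤ rightNbr L k + 1 := by
  unfold rightNbr
  split_ifs <;> omega

lemma leftNbr_lt {L k : ℕ} (hL : 2 ≤ L) (hk : k < L) : leftNbr k < L := by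
  unfold leftNbr
  split_ifs <;> omega

lemma rightNbr_lt {L k : ℕ} (hk : k < L) : rightNbr L k < L := by
  unfold rightNbr
  split_ifs <;> omega

lemma piMat_apply_div_endWeight {L : ℕ} (hL : 3 ≤ L) (i k : Fin L) :
    PiMat L i k / endWeight L k =
      ((if (k : ℕ) = i then 1 / 2 else 0) - (if (k : ℕ) = leftNbr i then 1 / 4 else 0)
        - (if (k : ℕ) = rightNbr L i then 1 / 4 else 0)) / endWeight L i := by
  have hi := i.isLt
  have hk := k.isLt
  have hsq : √2 * √2 = 2 := Real.mul_self_sqrt zero_le_two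
  simp only [PiMat, of_apply, endWeight, leftNbr, rightNbr]
  split_ifs <;> first | omega | (field_simp; try linarith)

lemma piMat_mulVec_div_endWeight {L : ℕ} (hL : 3 ≤ L) (u : ℕ → ℝ) (j : Fin L) :
    (PiMat L *ᵥ fun i => u i / endWeight L i) j =
      (u j / 2 - (u (leftNbr j) + u (rightNbr L j)) / 4) / endWeight L j := by
  have sum_site (s : ℕ) (hs : s < L) (c : ℝ) :
      ∑ k : Fin L, (if (k : ℕ) = s then c else 0) * u k = c * u s := by
    rw [Fin.sum_univ_eq_sum_range fun k => (if k = s then c else 0) * u k]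
    simp [hs]
  calc (PiMat L *ᵥ fun i => u i / endWeight L i) j
      = ∑ k : Fin L, PiMat L j k / endWeight L k * u k := by
        simp only [mulVec, dotProduct, mul_comm_div]
    _ = (1 / 2 * u j - 1 / 4 * u (leftNbr j) - 1 / 4 * u (rightNbr L j)) / endWeight L j := by
        simp only [piMat_apply_div_endWeight hL, div_mul_eq_mul_div _ (endWeight L j), sub_mul]
        rw [← Finset.sum_div, Finset.sum_sub_distrib, Finset.sum_sub_distrib, sum_site j j.isLt,
          sum_site _ (leftNbr_lt (by omega) j.isLt), sum_site _ (rightNbr_lt j.isLt)]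
    _ = (u j / 2 - (u (leftNbr j) + u (rightNbr L j)) / 4) / endWeight L j := by ring

lemma piPh_mulVec {L : ℕ} (hL : 2 ≤ L) (a : ℕ → ℝ) (v : Fin L → ℝ) (j : Fin L) :
    (PiPh L (fun i => a i) *ᵥ v) j = (a (leftNbr j) + a (rightNbr L j)) / 2 * v j := by
  have hj := j.isLt
  rw [PiPh, mulVec_diagonal]
  simp only [leftNbr, rightNbr]
  split_ifs with h0 hlast <;> first
    | omega
    | (have : L - 2 = j - 1 := by omega)
      simp [*]
    | simp [*]

lemma eVec_eq_single {L m : ℕ} (hm : m < L) :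
    eVec L ⟨m, hm⟩ = fun i : Fin L => (Pi.single m 1 : ℕ → ℝ) i := by
  ext i
  simp [eVec, Pi.single_apply, Fin.ext_iff]

/-- The sum of `u` over the two neighbours of `j`, with the potential that `a` exerts on `j` split
between them: each neighbour `k` also carries the share `2 w a_k u_j`, where `w = 1/λ`. -/
def dressedNbrSum (L : ℕ) (w : ℝ) (a u : ℕ → ℝ) (j : ℕ) : ℝ :=
  (u (leftNbr j) + 2 * w * a (leftNbr j) * u j) +
    (u (rightNbr L j) + 2 * w * a (rightNbr L j) * u j)

/-- The terms in `μ` cancel, so `μ` is arbitrary; for a candidate eigenvalue `λ (μ - 1) / 2` the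
last summand is the residual of the eigenvalue equation. -/
lemma piPh_sub_smul_piMat_mulVec {L : ℕ} (hL : 3 ≤ L) {lam : ℝ} (hlam : lam ≠ 0) (μ : ℝ)
    (a u : ℕ → ℝ) (j : Fin L) :
    ((PiPh L (fun i => a i) - lam • PiMat L) *ᵥ fun i => u i / endWeight L i) j =
      lam * (μ - 1) / 2 * (u j / endWeight L j) +
        lam / 4 * (dressedNbrSum L (1 / lam) a u j - 2 * μ * u j) / endWeight L j := by
  rw [sub_mulVec, Pi.sub_apply, smul_mulVec, Pi.smul_apply, smul_eq_mul,
    piPh_mulVec (by omega), piMat_mulVec_div_endWeight hL, dressedNbrSum]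
  field_simp
  ring

end ReflectedChain

section HyperbolicProfile

lemma cosh_add_add_cosh_sub (t x : ℝ) :
    Real.cosh (t + x) + Real.cosh (t - x) = 2 * Real.cosh x * Real.cosh t := by
  rw [Real.cosh_add, Real.cosh_sub]
  ring

lemma cosh_add_one_mul_add_cosh_sub_one_mul (t x : ℝ) :
    Real.cosh ((t + 1) * x) + Real.cosh ((t - 1) * x) =
      2 * Real.cosh x * Real.cosh (t * x) := by
  rw [add_one_mul, sub_one_mul, cosh_add_add_cosh_sub]

lemma cosh_leftNbr_mul (k : ℕ) (x : ℝ) :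
    Real.cosh (leftNbr k * x) = Real.cosh (((k : ℝ) - 1) * x) := by
  cases k <;> simp [leftNbr]

lemma cosh_sub_rightNbr_mul {N : ℕ} (hN : N ≠ 0) (k : ℕ) (x : ℝ) :
    Real.cosh (((N : ℝ) - rightNbr (N + 1) k) * x) = Real.cosh (((N : ℝ) - k - 1) * x) := by
  rcases eq_or_ne k N with rfl | hk
  · simp [rightNbr, Nat.cast_sub (Nat.one_le_iff_ne_zero.2 hN)]
  · simp [rightNbr, hk, sub_sub]

lemma cosh_add_add_sub_cosh_add_sub (a b x : ℝ) :
    1 / 2 * Real.cosh (a + b + x) - 1 / 2 * Real.cosh (a + b - x) =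
      2 * Real.cosh x * (Real.cosh a * Real.cosh b) - Real.cosh b * Real.cosh (a - x)
        - Real.cosh a * Real.cosh (b - x) := by
  simp only [Real.cosh_add, Real.cosh_sub, Real.sinh_add]
  ring

lemma cosh_add_add_cosh_two_mul_mul_cosh_sub (a b x : ℝ) :
    Real.cosh (a + b) + Real.cosh (2 * x) * Real.cosh (a - b) =
      2 * Real.cosh x * (Real.cosh a * Real.cosh (b - x) + Real.cosh (a - x) * Real.cosh b)
        - 2 * (Real.cosh (a - x) * Real.cosh (b - x)) := by
  simp only [Real.cosh_add, Real.cosh_sub, Real.cosh_two_mul]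
  linear_combination
    -(Real.cosh a * Real.cosh b + Real.sinh a * Real.sinh b) * Real.cosh_sq x

lemma cosh_add_sub_add_cosh_add_sub_sub_two_mul (a b x : ℝ) :
    Real.cosh (a + b - x) + Real.cosh (a + b - x - 2 * x) + 2 * Real.cosh x * Real.cosh (a - b) =
      4 * Real.cosh x * (Real.cosh (a - x) * Real.cosh (b - x)) := by
  have hsum : Real.cosh (a + b - x) + Real.cosh (a + b - x - 2 * x) =
      2 * Real.cosh x * Real.cosh ((a - x) + (b - x)) := by
    convert cosh_add_add_cosh_sub ((a - x) + (b - x)) x using 3 <;> ring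
  rw [hsum, (by ring : a - b = (a - x) - (b - x)), Real.cosh_add (a - x), Real.cosh_sub (a - x)]
  ring

/-- The amplitude `cosh (t x) - 2 w cosh ((t - 1) x)` which a defect with `w = 1/λ`, at distance `t`
from one end of the chain, imposes on the other side: this is `α` for `t = m₀ - 1` and `β` for
`t = L - m₀`. -/
noncomputable def edgeAmplitude (w x t : ℝ) : ℝ :=
  Real.cosh (t * x) - 2 * w * Real.cosh ((t - 1) * x)

/-- The vector `v` multiplied by the end weights, as a function of the 0-based site, for a defect
with `p` sites on its left and `n` sites on its right. -/
noncomputable def defectProfile (w x : ℝ) (p n k : ℕ) : ℝ :=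
  if k < p then edgeAmplitude w x n * Real.cosh (k * x)
  else if k = p then edgeAmplitude w x p * edgeAmplitude w x n
  else edgeAmplitude w x p * Real.cosh (((p : ℝ) + n - k) * x)

variable (w x : ℝ) {p n j k : ℕ}

lemma defectProfile_of_lt (hk : k < p) :
    defectProfile w x p n k = edgeAmplitude w x n * Real.cosh (k * x) :=
  if_pos hk

lemma defectProfile_self (p n : ℕ) :
    defectProfile w x p n p = edgeAmplitude w x p * edgeAmplitude w x n := by
  simp [defectProfile]

lemma defectProfile_of_gt (hk : p < k) :
    defectProfile w x p n k = edgeAmplitude w x p * Real.cosh (((p : ℝ) + n - k) * x) := by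
  rw [defectProfile, if_neg (by omega), if_neg (by omega)]

/-- At `k = p` the potential turns the value on the defect into the continuation of the left half
of the profile. -/
lemma defectProfile_add_potential_of_lt (hj : j < p) (hk : k ≤ j + 1) :
    defectProfile w x p n k + 2 * w * (Pi.single p 1 : ℕ → ℝ) k * defectProfile w x p n j =
      edgeAmplitude w x n * Real.cosh (k * x) := by
  rw [defectProfile_of_lt w x hj]
  rcases (by omega : k < p ∨ k = p ∧ p = j + 1) with hkp | ⟨rfl, rfl⟩
  · rw [defectProfile_of_lt w x hkp, Pi.single_eq_of_ne hkp.ne]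
    ring
  · rw [defectProfile_self, Pi.single_eq_same, edgeAmplitude]
    push_cast
    ring_nf

lemma defectProfile_add_potential_of_gt (hj : p < j) (hk : j ≤ k + 1) :
    defectProfile w x p n k + 2 * w * (Pi.single p 1 : ℕ → ℝ) k * defectProfile w x p n j =
      edgeAmplitude w x p * Real.cosh (((p : ℝ) + n - k) * x) := by
  rw [defectProfile_of_gt w x hj]
  rcases (by omega : p < k ∨ k = p ∧ j = p + 1) with hkp | ⟨rfl, rfl⟩
  · rw [defectProfile_of_gt w x hkp, Pi.single_eq_of_ne hkp.ne']
    ring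
  · rw [defectProfile_self, Pi.single_eq_same, edgeAmplitude.eq_def w x n]
    push_cast
    ring_nf

lemma dressedNbrSum_defectProfile_of_ne (hj : j ≠ p) (hjL : j < p + n + 1) :
    dressedNbrSum (p + n + 1) w (Pi.single p 1) (defectProfile w x p n) j =
      2 * Real.cosh x * defectProfile w x p n j := by
  rcases hj.lt_or_gt with hlt | hgt
  · have hr : rightNbr (p + n + 1) j = j + 1 := rightNbr_of_ne (by omega)
    rw [dressedNbrSum, defectProfile_add_potential_of_lt w x hlt (leftNbr_le j),
      defectProfile_add_potential_of_lt w x hlt hr.le, defectProfile_of_lt w x hlt,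
      cosh_leftNbr_mul, hr]
    push_cast
    linear_combination
      edgeAmplitude w x n * cosh_add_one_mul_add_cosh_sub_one_mul (j : ℝ) x
  · have hl : leftNbr j = j - 1 := leftNbr_of_ne_zero (by omega)
    have hreflect := cosh_sub_rightNbr_mul (by omega : p + n ≠ 0) j x
    have hrec := cosh_add_one_mul_add_cosh_sub_one_mul ((p : ℝ) + n - j) x
    push_cast at hreflect
    rw [dressedNbrSum, defectProfile_add_potential_of_gt w x hgt (by omega : j ≤ leftNbr j + 1),
      defectProfile_add_potential_of_gt w x hgt (le_rightNbr _ j), defectProfile_of_gt w x hgt,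
      hreflect, hl,
      Nat.cast_pred (by omega), sub_sub_eq_add_sub, add_sub_right_comm]
    linear_combination edgeAmplitude w x p * hrec

lemma ffun_eq_edgeAmplitude {L : ℕ} {s t y : ℝ} (hL : (L : ℝ) = s + t + 1)
    (hy : ((L : ℝ) - 3) * y = s - t) :
    Ffun L x w y =
      2 * Real.cosh x * (edgeAmplitude w x s * edgeAmplitude w x t)
        - edgeAmplitude w x t * Real.cosh ((s - 1) * x)
        - edgeAmplitude w x s * Real.cosh ((t - 1) * x) := by
  have hyx : ((L : ℝ) - 3) * x * y = s * x - t * x := by linear_combination x * hy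
  have h0 : (L : ℝ) * x = s * x + t * x + x := by linear_combination x * hL
  have h1 : ((L : ℝ) - 1) * x = s * x + t * x := by linear_combination x * hL
  have h2 : ((L : ℝ) - 2) * x = s * x + t * x - x := by linear_combination x * hL
  have h4 : ((L : ℝ) - 4) * x = s * x + t * x - x - 2 * x := by linear_combination x * hL
  simp only [Ffun, hyx, h0, h1, h2, h4, edgeAmplitude, sub_one_mul]
  linear_combination cosh_add_add_sub_cosh_add_sub (s * x) (t * x) x
    - 2 * w * cosh_add_add_cosh_two_mul_mul_cosh_sub (s * x) (t * x) x
    + 2 * w ^ 2 * cosh_add_sub_add_cosh_add_sub_sub_two_mul (s * x) (t * x) x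

lemma dressedNbrSum_defectProfile_self (hp : 0 < p) (hn : 0 < n) {y : ℝ}
    (hy : (((p + n + 1 : ℕ) : ℝ) - 3) * y = p - n) :
    dressedNbrSum (p + n + 1) w (Pi.single p 1) (defectProfile w x p n) p =
      2 * Real.cosh x * defectProfile w x p n p - Ffun (p + n + 1) x w y := by
  have hl : leftNbr p < p := by
    rw [leftNbr_of_ne_zero hp.ne']
    omega
  have hr : rightNbr (p + n + 1) p = p + 1 := rightNbr_of_ne (by omega)
  rw [dressedNbrSum, Pi.single_eq_of_ne hl.ne, defectProfile_of_lt w x hl, cosh_leftNbr_mul, hr,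
    Pi.single_eq_of_ne p.succ_ne_self, defectProfile_of_gt w x p.lt_succ_self,
    defectProfile_self, ffun_eq_edgeAmplitude w x (by push_cast; ring) hy]
  push_cast
  ring_nf

lemma defectProfile_div_endWeight (hp : 0 < p) (hn : 0 < n) (hk : k < p + n + 1) :
    defectProfile w x p n k / endWeight (p + n + 1) k =
      if k = 0 then edgeAmplitude w x n / √2
      else if k < p then edgeAmplitude w x n * Real.cosh (k * x)
      else if k = p then edgeAmplitude w x p * edgeAmplitude w x n
      else if k < p + n then edgeAmplitude w x p * Real.cosh (((p : ℝ) + n - k) * x)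
      else edgeAmplitude w x p / √2 := by
  unfold defectProfile endWeight
  rcases eq_or_ne k 0 with rfl | h0
  · simp [hp]
  rcases eq_or_ne k (p + n) with rfl | hlast
  · simp [hn.ne', hp.ne']
  · simp [h0, hlast, (by omega : k < p + n)]

end HyperbolicProfile

theorem stmt_18_general (L : ℕ) (hL : 4 ≤ L) (lam : ℝ) (hlam : lam ≠ 0)
    (m₀ : ℕ) (hm₀ : 2 ≤ m₀ ∧ m₀ ≤ L - 1) (x : ℝ) (α β : ℝ)
    (hα : α = Real.cosh (((m₀ : ℝ) - 1) * x) - (2 / lam) * Real.cosh (((m₀ : ℝ) - 2) * x))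
    (hβ : β = Real.cosh (((L : ℝ) - m₀) * x) - (2 / lam) * Real.cosh (((L : ℝ) - m₀ - 1) * x))
    (v : Fin L → ℝ)
    (hv : v = fun i : Fin L =>
      if (i : ℕ) + 1 = 1 then β / √2
      else if (i : ℕ) + 1 < m₀ then β * Real.cosh ((((i : ℕ) : ℝ) + 1 - 1) * x)
      else if (i : ℕ) + 1 = m₀ then α * β
      else if (i : ℕ) + 1 < L then α * Real.cosh (((L : ℝ) - ((i : ℕ) + 1)) * x)
      else α / √2)
    (A : Matrix (Fin L) (Fin L) ℝ)
    (hA : A = PiPh L (eVec L ⟨m₀ - 1, by omega⟩) - lam • PiMat L) :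
    (∀ j : Fin L, (j : ℕ) + 1 ≠ m₀ →
      A.mulVec v j = (lam * (Real.cosh x - 1) / 2) * v j) ∧
    (∀ j : Fin L, (j : ℕ) + 1 = m₀ →
      A.mulVec v j = (lam * (Real.cosh x - 1) / 2) * v j
        - (lam / 4) * Ffun L x (1 / lam) ((2 * (m₀ : ℝ) - L - 1) / ((L : ℝ) - 3))) := by
  obtain ⟨p, rfl⟩ : ∃ p, m₀ = p + 1 := ⟨m₀ - 1, by omega⟩
  obtain ⟨n, rfl⟩ : ∃ n, L = p + n + 1 := ⟨L - p - 1, by omega⟩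
  have hα' : α = edgeAmplitude (1 / lam) x p := by
    rw [hα, edgeAmplitude]
    push_cast
    ring_nf
  have hβ' : β = edgeAmplitude (1 / lam) x n := by
    rw [hβ, edgeAmplitude]
    push_cast
    ring_nf
  have hv' : v = fun i : Fin (p + n + 1) =>
      defectProfile (1 / lam) x p n i / endWeight (p + n + 1) i := by
    ext i
    rw [defectProfile_div_endWeight _ _ (by omega) (by omega) i.isLt, hv, ← hα', ← hβ']
    simp
  have hAv (j : Fin (p + n + 1)) := piPh_sub_smul_piMat_mulVec (by omega) hlam (Real.cosh x)
    (Pi.single p 1) (defectProfile (1 / lam) x p n) j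
  rw [eVec_eq_single, Nat.add_sub_cancel] at hA
  rw [← hv', ← hA] at hAv
  refine ⟨fun j hj => ?_, fun j hj => ?_⟩
  · rw [hAv, dressedNbrSum_defectProfile_of_ne _ _ (by omega) j.isLt, sub_self, mul_zero, zero_div,
      add_zero, hv']
  · have hjp : (j : ℕ) = p := by omega
    have hL3 : ((p + n + 1 : ℕ) : ℝ) - 3 ≠ 0 :=
      sub_ne_zero.2 (by exact_mod_cast (by omega : p + n + 1 ≠ 3))
    have hy := mul_div_cancel₀ (2 * ((p + 1 : ℕ) : ℝ) - (p + n + 1 : ℕ) - 1) hL3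
    rw [hAv, hv']
    simp only [hjp]
    rw [dressedNbrSum_defectProfile_self _ _ (by omega) (by omega)
      (hy.trans (by push_cast; ring)), endWeight_eq_one (by omega) (by omega)]
    ring

theorem stmt_18 (L : ℕ) (hL : 5 ≤ L) (lam : ℝ) (hlam : 0 < lam)
    (m₀ : ℕ) (hm₀ : 2 ≤ m₀ ∧ m₀ ≤ L - 1) (x : ℝ) (α β : ℝ)
    (hα : α = Real.cosh (((m₀:ℝ) - 1)*x) - (2/lam)*Real.cosh (((m₀:ℝ) - 2)*x))
    (hβ : β = Real.cosh (((L:ℝ) - m₀)*x) - (2/lam)*Real.cosh (((L:ℝ) - m₀ - 1)*x))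
    (v : Fin L → ℝ)
    (hv : v = fun i : Fin L =>
      if (i : ℕ) + 1 = 1 then β / Real.sqrt 2
      else if (i : ℕ) + 1 < m₀ then β * Real.cosh ((((i : ℕ) : ℝ) + 1 - 1)*x)
      else if (i : ℕ) + 1 = m₀ then α * β
      else if (i : ℕ) + 1 < L then α * Real.cosh (((L:ℝ) - ((i : ℕ) + 1))*x)
      else α / Real.sqrt 2)
    (A : Matrix (Fin L) (Fin L) ℝ)
    (hA : A = PiPh L (eVec L ⟨m₀ - 1, by omega⟩) - lam • PiMat L) :
    (∀ j : Fin L, (j : ℕ) + 1 ≠ m₀ →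
      A.mulVec v j = (lam*(Real.cosh x - 1)/2) * v j) ∧
    (∀ j : Fin L, (j : ℕ) + 1 = m₀ →
      A.mulVec v j = (lam*(Real.cosh x - 1)/2) * v j
        - (lam/4) * Ffun L x (1/lam) ((2*(m₀:ℝ) - L - 1)/((L:ℝ) - 3))) :=
  stmt_18_general L (by omega) lam hlam.ne' m₀ hm₀ x α β hα hβ v hv A hA
end
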